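/- arXiv:1304.1263 — 4 statements merged into one kernel-verified Lean document; each statement's English description precedes it below -/
import Mathlib

section
/- The number of permutations of {1,...,n} with a given set A ⊆ {1,...,n} of over-diagonal values, a given set B ⊆ {1,...,n} of under-diagonal values (with A, B disjoint and the remaining elements on the diagonal) equals the number of pairs of ordered set compositions A = A_1 ∪ ... ∪ A_k, B = B_1 ∪ ... ∪ B_k into nonempty parts with min A_i > max B_i for all i. -/
namespace CompPerm

variable {n : ℕ}

/-- A block of a composition: both parts nonempty, the second lies below the first. -/
def Val (S T : Finset (Fin n)) : Prop :=
  S.Nonempty ∧ T.Nonempty ∧ ∀ b ∈ T, ∀ a ∈ S, b < a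

/-- `L` is a composition of the pair `(A, B)`. -/
def PL (A B : Finset (Fin n)) (L : List (Finset (Fin n) × Finset (Fin n))) : Prop :=
  (∀ p ∈ L, p.1.Nonempty ∧ p.2.Nonempty ∧ ∀ b ∈ p.2, ∀ a ∈ p.1, b < a) ∧
        (L.map Prod.fst).Pairwise Disjoint ∧
        (L.map Prod.snd).Pairwise Disjoint ∧
        (L.map Prod.fst).foldr (· ∪ ·) ∅ = A ∧
        (L.map Prod.snd).foldr (· ∪ ·) ∅ = B

lemma disj_foldr (s : Finset (Fin n)) (l : List (Finset (Fin n))) :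
    (∀ t ∈ l, Disjoint s t) ↔ Disjoint s (l.foldr (· ∪ ·) ∅) := by
  induction l with
  | nil => simp
  | cons a l ih => simp [Finset.disjoint_union_right, ← ih]

lemma union_disj (s u A : Finset (Fin n)) :
    (Disjoint s u ∧ s ∪ u = A) ↔ (s ⊆ A ∧ u = A \ s) := by
  constructor
  · rintro ⟨h, rfl⟩
    exact ⟨Finset.subset_union_left, by rw [Finset.union_sdiff_cancel_left h]⟩
  · rintro ⟨h, rfl⟩
    exact ⟨Finset.disjoint_sdiff, Finset.union_sdiff_of_subset h⟩

lemma PL_nil (A B : Finset (Fin n)) : PL A B [] ↔ (A = ∅ ∧ B = ∅) := by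
  simp [PL, eq_comm]

lemma PL_cons (A B : Finset (Fin n)) (p : Finset (Fin n) × Finset (Fin n)) (L) :
    PL A B (p :: L) ↔ (Val p.1 p.2 ∧ p.1 ⊆ A ∧ p.2 ⊆ B) ∧ PL (A \ p.1) (B \ p.2) L := by
  have h1 := union_disj p.1 ((L.map Prod.fst).foldr (· ∪ ·) ∅) A
  have h2 := union_disj p.2 ((L.map Prod.snd).foldr (· ∪ ·) ∅) B
  rw [← disj_foldr] at h1 h2
  unfold PL Val
  rw [List.map_cons, List.map_cons, List.pairwise_cons, List.pairwise_cons, List.foldr_cons,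
    List.foldr_cons, List.forall_mem_cons]
  tauto

/-- Splitting off the first block. -/
def splitEquiv (A B : Finset (Fin n)) : {L // PL A B L} ≃
    {_u : Unit // A = ∅ ∧ B = ∅} ⊕
      (Σ p : {p : Finset (Fin n) × Finset (Fin n) // Val p.1 p.2 ∧ p.1 ⊆ A ∧ p.2 ⊆ B},
        {L // PL (A \ p.1.1) (B \ p.1.2) L}) where
  toFun L := match L with
    | ⟨[], h⟩ => Sum.inl ⟨(), (PL_nil A B).1 h⟩
    | ⟨p :: L, h⟩ => Sum.inr ⟨⟨p, ((PL_cons A B p L).1 h).1⟩, ⟨L, ((PL_cons A B p L).1 h).2⟩⟩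
  invFun z := match z with
    | Sum.inl u => ⟨[], (PL_nil A B).2 u.2⟩
    | Sum.inr ⟨p, L⟩ => ⟨p.1 :: L.1, (PL_cons A B p.1 L.1).2 ⟨p.2, L.2⟩⟩
  left_inv L := by
    match L with
    | ⟨[], h⟩ => rfl
    | ⟨p :: L, h⟩ => rfl
  right_inv z := by
    match z with
    | Sum.inl u => rfl
    | Sum.inr ⟨p, L⟩ => rfl

lemma card_lt {A B S T : Finset (Fin n)} (hv : Val S T) (hS : S ⊆ A) (hT : T ⊆ B) :
    (A \ S).card + (B \ T).card < A.card + B.card := by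
  have h1 := Finset.card_sdiff_add_card_eq_card hS
  have h2 := Finset.card_sdiff_add_card_eq_card hT
  have h3 := hv.1.card_pos
  omega

lemma finite_PL (k : ℕ) : ∀ A B : Finset (Fin n), A.card + B.card < k →
    Finite {L // PL A B L} := by
  induction k with
  | zero => intro A B h; omega
  | succ k ih =>
    intro A B h
    have : ∀ p : {p : Finset (Fin n) × Finset (Fin n) // Val p.1 p.2 ∧ p.1 ⊆ A ∧ p.2 ⊆ B},
        Finite {L // PL (A \ p.1.1) (B \ p.1.2) L} := by
      intro p
      have := card_lt p.2.1 p.2.2.1 p.2.2.2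
      exact ih _ _ (by omega)
    exact Finite.of_equiv _ (splitEquiv A B).symm

instance (A B : Finset (Fin n)) : Finite {L // PL A B L} :=
  finite_PL _ A B (Nat.lt_succ_self _)

/-- The number of compositions. -/
noncomputable def C (A B : Finset (Fin n)) : ℕ := Nat.card {L // PL A B L}

open Classical in
/-- Indicator of a block. -/
noncomputable def w (S T : Finset (Fin n)) : ℕ := if Val S T then 1 else 0

open Classical in
lemma C_rec (A B : Finset (Fin n)) : C A B = (if A = ∅ ∧ B = ∅ then 1 else 0) +
    ∑ S ∈ A.powerset, ∑ T ∈ B.powerset, w S T * C (A \ S) (B \ T) := by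
  unfold C
  rw [Nat.card_congr (splitEquiv A B), Nat.card_sum, Nat.card_sigma]
  congr 1
  · by_cases h : A = ∅ ∧ B = ∅
    · simp [h]
    · simp [h]
  · rw [← Finset.sum_product']
    simp only [w, ite_mul, one_mul, zero_mul]
    rw [← Finset.sum_filter]
    symm
    refine Finset.sum_subtype (p := fun p : Finset (Fin n) × Finset (Fin n) =>
      Val p.1 p.2 ∧ p.1 ⊆ A ∧ p.2 ⊆ B) _ ?_
      (fun p => Nat.card {L // PL (A \ p.1) (B \ p.2) L})
    intro p
    simp only [Finset.mem_filter, Finset.mem_product, Finset.mem_powerset]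
    tauto

/-- No element of `A` or `B` lies in the closed interval `[x, y]`. -/
def Gap (x y : Fin n) (A : Finset (Fin n)) : Prop := ∀ z ∈ A, z < x ∨ y < z

lemma Gap.mono {x y : Fin n} {A A' : Finset (Fin n)} (h : Gap x y A) (hs : A' ⊆ A) :
    Gap x y A' := fun z hz => h z (hs hz)

lemma Gap.nx {x y : Fin n} {A : Finset (Fin n)} (hxy : x < y) (h : Gap x y A) : x ∉ A := by
  intro hx; have := h x hx; omega

lemma Gap.ny {x y : Fin n} {A : Finset (Fin n)} (hxy : x < y) (h : Gap x y A) : y ∉ A := by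
  intro hx; have := h y hx; omega

lemma w_mul {S T : Finset (Fin n)} {a b : ℕ} (h : Val S T → a = b) : w S T * a = w S T * b := by
  unfold w; split_ifs with hv
  · rw [h hv]
  · simp

lemma w_congr {S T S' T' : Finset (Fin n)} (h : Val S T ↔ Val S' T') : w S T = w S' T' := by
  unfold w; by_cases hv : Val S T
  · rw [if_pos hv, if_pos (h.1 hv)]
  · rw [if_neg hv, if_neg (fun h' => hv (h.2 h'))]

lemma w_a {x y : Fin n} {S T : Finset (Fin n)} (hT : Gap x y T) (hxy : x < y) :
    w (insert y S) T = w (insert x S) T := by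
  apply w_congr
  unfold Val Gap at *
  simp only [Finset.insert_nonempty, Finset.forall_mem_insert, true_and]
  grind

lemma w_b {x y : Fin n} {S T : Finset (Fin n)} (hT : Gap x y S) (hxy : x < y) :
    w S (insert y T) = w S (insert x T) := by
  apply w_congr
  unfold Val Gap at *
  simp only [Finset.insert_nonempty, Finset.forall_mem_insert, true_and]
  grind

lemma w_ab {x y : Fin n} {S T : Finset (Fin n)} (hxy : x < y) :
    w (insert x S) (insert y T) = 0 := by
  unfold w Val
  simp only [Finset.insert_nonempty, Finset.forall_mem_insert, true_and]
  grind

open Classical in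
lemma w_key {x y : Fin n} {S T : Finset (Fin n)} (hxy : x < y) (hS : Gap x y S)
    (hT : Gap x y T) :
    w S T + w (insert y S) (insert x T) =
      w S (insert x T) + w (insert y S) T + if S = ∅ ∧ T = ∅ then 1 else 0 := by
  unfold w Val Gap at *
  rcases S.eq_empty_or_nonempty with rfl | hSn
  · rcases T.eq_empty_or_nonempty with rfl | hTn
    · simp [hxy]
    · simp [hxy, hTn, hTn.ne_empty]
  · rcases T.eq_empty_or_nonempty with rfl | hTn
    · simp [hxy, hSn, hSn.ne_empty]
    · simp only [hSn, hTn, hSn.ne_empty, Finset.insert_nonempty, Finset.forall_mem_insert,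
        true_and, false_and, if_false, add_zero, hxy]
      obtain ⟨s, hs⟩ := hSn
      obtain ⟨t, ht⟩ := hTn
      by_cases h0 : ∀ b ∈ T, ∀ a ∈ S, b < a
      · by_cases h1 : ∀ a ∈ S, x < a
        · by_cases h2 : ∀ b ∈ T, b < y
          · have : ∀ b ∈ T, b < y ∧ ∀ a ∈ S, b < a := fun b hb => ⟨h2 b hb, h0 b hb⟩
            rw [if_pos h0, if_pos (by tauto), if_pos (by tauto), if_pos this]
          · have : ¬ ∀ b ∈ T, b < y ∧ ∀ a ∈ S, b < a := fun h => h2 fun b hb => (h b hb).1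
            rw [if_pos h0, if_neg (by tauto), if_pos ⟨h1, h0⟩, if_neg this]
        · have h2 : ∀ b ∈ T, b < y ∧ ∀ a ∈ S, b < a := by
            refine fun b hb => ⟨?_, h0 b hb⟩
            push Not at h1
            obtain ⟨a, ha, hax⟩ := h1
            have := h0 b hb a ha
            omega
          rw [if_pos h0, if_neg (by tauto), if_neg (by tauto), if_pos h2]
      · have : ¬ ∀ b ∈ T, b < y ∧ ∀ a ∈ S, b < a := fun h => h0 fun b hb => (h b hb).2
        rw [if_neg h0, if_neg (by tauto), if_neg (by tauto), if_neg this]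

lemma ins_sdiff {x : Fin n} {A S : Finset (Fin n)} (hA : x ∉ A) (hS : S ⊆ A) :
    insert x A \ S = insert x (A \ S) :=
  Finset.insert_sdiff_of_notMem _ (fun h => hA (hS h))

lemma ins_sdiff_ins {x : Fin n} {A S : Finset (Fin n)} (hA : x ∉ A) :
    insert x A \ insert x S = A \ S := by
  ext z; simp only [Finset.mem_sdiff, Finset.mem_insert]; grind

/-- Recursion with an extra element in `A`. -/
lemma C_rec_a {x : Fin n} {A B : Finset (Fin n)} (hA : x ∉ A) :
    C (insert x A) B = ∑ S ∈ A.powerset, ∑ T ∈ B.powerset,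
      (w S T * C (insert x (A \ S)) (B \ T) + w (insert x S) T * C (A \ S) (B \ T)) := by
  rw [C_rec, Finset.sum_powerset_insert hA, if_neg (by simp), zero_add,
    ← Finset.sum_add_distrib]
  refine Finset.sum_congr rfl fun S hS => ?_
  rw [ins_sdiff hA (Finset.mem_powerset.1 hS), ins_sdiff_ins hA, ← Finset.sum_add_distrib]

/-- Recursion with an extra element in `B`. -/
lemma C_rec_b {x : Fin n} {A B : Finset (Fin n)} (hB : x ∉ B) :
    C A (insert x B) = ∑ S ∈ A.powerset, ∑ T ∈ B.powerset,
      (w S T * C (A \ S) (insert x (B \ T)) + w S (insert x T) * C (A \ S) (B \ T)) := by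
  rw [C_rec, if_neg (by simp), zero_add]
  refine Finset.sum_congr rfl fun S hS => ?_
  rw [Finset.sum_powerset_insert hB, ← Finset.sum_add_distrib]
  refine Finset.sum_congr rfl fun T hT => ?_
  rw [ins_sdiff hB (Finset.mem_powerset.1 hT), ins_sdiff_ins hB]

/-- Recursion with an extra element in both. -/
lemma C_rec_ab {x y : Fin n} {A B : Finset (Fin n)} (hA : y ∉ A) (hB : x ∉ B) :
    C (insert y A) (insert x B) = ∑ S ∈ A.powerset, ∑ T ∈ B.powerset,
      (w S T * C (insert y (A \ S)) (insert x (B \ T)) +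
       w S (insert x T) * C (insert y (A \ S)) (B \ T) +
       w (insert y S) T * C (A \ S) (insert x (B \ T)) +
       w (insert y S) (insert x T) * C (A \ S) (B \ T)) := by
  rw [C_rec_a hA]
  refine Finset.sum_congr rfl fun S hS => ?_
  rw [Finset.sum_powerset_insert hB, ← Finset.sum_add_distrib]
  refine Finset.sum_congr rfl fun T hT => ?_
  rw [ins_sdiff hB (Finset.mem_powerset.1 hT), ins_sdiff_ins hB]
  ring

lemma C_move_a {x y : Fin n} (hxy : x < y) (k : ℕ) : ∀ A B : Finset (Fin n),
    A.card + B.card < k → Gap x y A → Gap x y B → C (insert y A) B = C (insert x A) B := by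
  induction k with
  | zero => intro A B h; omega
  | succ k ih =>
    intro A B h hA hB
    rw [C_rec_a (hA.ny hxy), C_rec_a (hA.nx hxy)]
    refine Finset.sum_congr rfl fun S hS => Finset.sum_congr rfl fun T hT => ?_
    rw [Finset.mem_powerset] at hS hT
    rw [w_a (hB.mono hT) hxy]
    congr 1
    refine w_mul fun hv => ih _ _ ?_ (hA.mono Finset.sdiff_subset) (hB.mono Finset.sdiff_subset)
    have := card_lt hv hS hT
    omega

lemma C_move_b {x y : Fin n} (hxy : x < y) (k : ℕ) : ∀ A B : Finset (Fin n),
    A.card + B.card < k → Gap x y A → Gap x y B → C A (insert y B) = C A (insert x B) := by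
  induction k with
  | zero => intro A B h; omega
  | succ k ih =>
    intro A B h hA hB
    rw [C_rec_b (hB.ny hxy), C_rec_b (hB.nx hxy)]
    refine Finset.sum_congr rfl fun S hS => Finset.sum_congr rfl fun T hT => ?_
    rw [Finset.mem_powerset] at hS hT
    rw [w_b (hA.mono hS) hxy]
    congr 1
    refine w_mul fun hv => ih _ _ ?_ (hA.mono Finset.sdiff_subset) (hB.mono Finset.sdiff_subset)
    have := card_lt hv hS hT
    omega

open Classical in
lemma C_swap {x y : Fin n} (hxy : x < y) (k : ℕ) : ∀ A B : Finset (Fin n),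
    A.card + B.card < k → Gap x y A → Gap x y B →
    C (insert y A) (insert x B) =
      C (insert x A) (insert y B) + C (insert y A) B + C A (insert x B) + C A B := by
  induction k with
  | zero => intro A B h; omega
  | succ k ih =>
    intro A B h hA hB
    have hC0 : (if A = ∅ ∧ B = ∅ then 1 else 0) + C A B = 
        (∑ S ∈ A.powerset, ∑ T ∈ B.powerset,
          (if S = ∅ ∧ T = ∅ then 1 else 0) * C (A \ S) (B \ T)) + 
          if A = ∅ ∧ B = ∅ then 1 else 0 := by
      rw [add_comm]
      congr 1
      rw [Finset.sum_eq_single ∅, Finset.sum_eq_single ∅]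
      · simp
      · intro T _ hT; simp [hT]
      · simp
      · intro S _ hS; simp [hS]
      · simp
    have hC0' : C A B = ∑ S ∈ A.powerset, ∑ T ∈ B.powerset,
          (if S = ∅ ∧ T = ∅ then 1 else 0) * C (A \ S) (B \ T) := by omega
    rw [C_rec_ab (hA.ny hxy) (hB.nx hxy), C_rec_ab (hA.nx hxy) (hB.ny hxy),
      C_rec_a (hA.ny hxy), C_rec_b (hB.nx hxy), hC0']
    simp only [← Finset.sum_add_distrib]
    refine Finset.sum_congr rfl fun S hS => Finset.sum_congr rfl fun T hT => ?_
    rw [Finset.mem_powerset] at hS hT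
    have gA : Gap x y (A \ S) := hA.mono Finset.sdiff_subset
    have gB : Gap x y (B \ T) := hB.mono Finset.sdiff_subset
    rw [w_a (hB.mono hT) hxy, w_b (hA.mono hS) hxy, w_ab hxy,
      C_move_a hxy _ _ _ (Nat.lt_succ_self _) gA gB, C_move_b hxy _ _ _ (Nat.lt_succ_self _) gA gB]
    have h1 : w S T * C (insert y (A \ S)) (insert x (B \ T)) = w S T *
        (C (insert x (A \ S)) (insert y (B \ T)) + C (insert x (A \ S)) (B \ T) +
          C (A \ S) (insert x (B \ T)) + C (A \ S) (B \ T)) := by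
      refine w_mul fun hv => ?_
      have := card_lt hv hS hT
      rw [ih _ _ (by omega) gA gB, C_move_a hxy _ _ _ (Nat.lt_succ_self _) gA gB]
    have h2 := w_key hxy (hA.mono hS) (hB.mono hT)
    rw [w_a (hB.mono hT) hxy] at h2
    have h3 := congrArg (· * C (A \ S) (B \ T)) h2
    simp only [add_mul] at h3
    rw [h1]
    linarith

/-! ### Permutations -/

/-- `τ` is the inverse of a permutation with over-diagonal set `A`, under-diagonal set `B`. -/
def PP (A B : Finset (Fin n)) (τ : Equiv.Perm (Fin n)) : Prop :=
  ∀ v, (τ v < v ↔ v ∈ A) ∧ (v < τ v ↔ v ∈ B)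

open Classical in
/-- The set of these permutations. -/
noncomputable def FS (A B : Finset (Fin n)) : Finset (Equiv.Perm (Fin n)) :=
  Finset.univ.filter (PP A B)

lemma mem_FS {A B : Finset (Fin n)} {τ} : τ ∈ FS A B ↔ PP A B τ := by simp [FS]

lemma PP.fix {A B : Finset (Fin n)} {τ : Equiv.Perm (Fin n)} (h : PP A B τ) (v : Fin n)
    (h1 : τ v ∉ A) (h2 : τ v ∉ B) : τ v = v := by
  have := h (τ v)
  simp only [h1, h2, iff_false, not_lt] at this
  exact τ.injective (le_antisymm this.2 this.1)

lemma PP.conj1 {x y : Fin n} {A B : Finset (Fin n)} {τ : Equiv.Perm (Fin n)} (hxy : x < y)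
    (hA : Gap x y A) (hB : Gap x y B) (h : PP (insert y A) (insert x B) τ) (h1 : τ x ≠ y)
    (h2 : τ y ≠ x) : PP (insert x A) (insert y B) (Equiv.swap x y * τ * Equiv.swap x y) := by
  intro v
  have hx := h x
  have hy := h y
  have fx := h.fix x
  have fy := h.fix y
  have hv := h v
  have fv := h.fix v
  have i1 := τ.injective.eq_iff (a := v) (b := x)
  have i2 := τ.injective.eq_iff (a := v) (b := y)
  unfold Gap at *
  simp only [Equiv.Perm.mul_apply, Equiv.swap_apply_def, Finset.mem_insert] at *
  grind

lemma PP.conj2 {x y : Fin n} {A B : Finset (Fin n)} {τ : Equiv.Perm (Fin n)} (hxy : x < y)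
    (hA : Gap x y A) (hB : Gap x y B) (h : PP (insert x A) (insert y B) τ) :
    PP (insert y A) (insert x B) (Equiv.swap x y * τ * Equiv.swap x y) := by
  intro v
  have hx := h x
  have hy := h y
  have fx := h.fix x
  have fy := h.fix y
  have hv := h v
  have fv := h.fix v
  have i1 := τ.injective.eq_iff (a := v) (b := x)
  have i2 := τ.injective.eq_iff (a := v) (b := y)
  unfold Gap at *
  simp only [Equiv.Perm.mul_apply, Equiv.swap_apply_def, Finset.mem_insert] at *
  grind

lemma PP.conj3 {x y : Fin n} {A B : Finset (Fin n)} {τ : Equiv.Perm (Fin n)} (hxy : x < y)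
    (h : PP (insert x A) (insert y B) τ) :
    (Equiv.swap x y * τ * Equiv.swap x y) x ≠ y ∧ (Equiv.swap x y * τ * Equiv.swap x y) y ≠ x := by
  have hx := h x
  have hy := h y
  have fx := h.fix x
  have fy := h.fix y
  simp only [Equiv.Perm.mul_apply, Equiv.swap_apply_def, Finset.mem_insert] at *
  grind

lemma PP.mul1 {x y : Fin n} {A B : Finset (Fin n)} {τ : Equiv.Perm (Fin n)} (hxy : x < y)
    (hA : Gap x y A) (hB : Gap x y B) (h : PP (insert y A) (insert x B) τ)
    (h1 : τ x = y) (h2 : τ y ≠ x) : PP (insert y A) B (Equiv.swap x y * τ) := by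
  intro v
  have hx := h x
  have hy := h y
  have fx := h.fix x
  have fy := h.fix y
  have hv := h v
  have fv := h.fix v
  have i1 := τ.injective.eq_iff (a := v) (b := x)
  have i2 := τ.injective.eq_iff (a := v) (b := y)
  unfold Gap at *
  simp only [Equiv.Perm.mul_apply, Equiv.swap_apply_def, Finset.mem_insert] at *
  grind

lemma PP.mul2 {x y : Fin n} {A B : Finset (Fin n)} {τ : Equiv.Perm (Fin n)} (hxy : x < y)
    (hA : Gap x y A) (hB : Gap x y B) (h : PP (insert y A) (insert x B) τ)
    (h1 : τ x ≠ y) (h2 : τ y = x) : PP A (insert x B) (Equiv.swap x y * τ) := by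
  intro v
  have hx := h x
  have hy := h y
  have fx := h.fix x
  have fy := h.fix y
  have hv := h v
  have fv := h.fix v
  have i1 := τ.injective.eq_iff (a := v) (b := x)
  have i2 := τ.injective.eq_iff (a := v) (b := y)
  unfold Gap at *
  simp only [Equiv.Perm.mul_apply, Equiv.swap_apply_def, Finset.mem_insert] at *
  grind

lemma PP.mul3 {x y : Fin n} {A B : Finset (Fin n)} {τ : Equiv.Perm (Fin n)} (hxy : x < y)
    (hA : Gap x y A) (hB : Gap x y B) (h : PP (insert y A) (insert x B) τ)
    (h1 : τ x = y) (h2 : τ y = x) : PP A B (Equiv.swap x y * τ) := by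
  intro v
  have hx := h x
  have hy := h y
  have fx := h.fix x
  have fy := h.fix y
  have hv := h v
  have fv := h.fix v
  have i1 := τ.injective.eq_iff (a := v) (b := x)
  have i2 := τ.injective.eq_iff (a := v) (b := y)
  unfold Gap at *
  simp only [Equiv.Perm.mul_apply, Equiv.swap_apply_def, Finset.mem_insert] at *
  grind

lemma PP.back {x y : Fin n} {A B : Finset (Fin n)} {τ : Equiv.Perm (Fin n)} (hxy : x < y)
    (hA : Gap x y A) (hB : Gap x y B)
    (h : PP (insert y A) B τ ∨ PP A (insert x B) τ ∨ PP A B τ) :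
    PP (insert y A) (insert x B) (Equiv.swap x y * τ) ∧
      ((Equiv.swap x y * τ) x = y ∨ (Equiv.swap x y * τ) y = x) := by
  have nxA := hA.nx hxy
  have nxB := hB.nx hxy
  have nyA := hA.ny hxy
  have nyB := hB.ny hxy
  constructor
  · intro v
    have i1 := τ.injective.eq_iff (a := v) (b := x)
    have i2 := τ.injective.eq_iff (a := v) (b := y)
    unfold Gap at *
    rcases h with h | h | h
    all_goals
      have hx := h x
      have hy := h y
      have fx := h.fix x
      have fy := h.fix y
      have hv := h v
      have fv := h.fix v
      simp only [Equiv.Perm.mul_apply, Equiv.swap_apply_def, Finset.mem_insert] at *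
      grind
  · rcases h with h | h | h
    all_goals
      have hx := h x
      have hy := h y
      have fx := h.fix x
      have fy := h.fix y
      simp only [Equiv.Perm.mul_apply, Equiv.swap_apply_def, Finset.mem_insert] at *
      grind

lemma FS_disj {A B A' B' : Finset (Fin n)} (h : A ≠ A' ∨ B ≠ B') :
    Disjoint (FS A B) (FS A' B') := by
  rw [Finset.disjoint_left]
  intro τ h1 h2
  rw [mem_FS] at h1 h2
  rcases h with h | h
  · exact h (Finset.ext fun v => (h1 v).1.symm.trans (h2 v).1)
  · exact h (Finset.ext fun v => (h1 v).2.symm.trans (h2 v).2)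

open Classical in
lemma FS_swap {x y : Fin n} (hxy : x < y) {A B : Finset (Fin n)} (hA : Gap x y A)
    (hB : Gap x y B) :
    (FS (insert y A) (insert x B)).card = (FS (insert x A) (insert y B)).card +
      (FS (insert y A) B).card + (FS A (insert x B)).card + (FS A B).card := by
  have nxB := hB.nx hxy
  have nyA := hA.ny hxy
  rw [← Finset.card_filter_add_card_filter_not (s := FS (insert y A) (insert x B))
    (fun τ => τ x = y ∨ τ y = x)]
  have e1 : ((FS (insert y A) (insert x B)).filter (fun τ => ¬ (τ x = y ∨ τ y = x))).card =
      (FS (insert x A) (insert y B)).card := by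
    refine Finset.card_nbij' (fun τ => Equiv.swap x y * τ * Equiv.swap x y)
      (fun τ => Equiv.swap x y * τ * Equiv.swap x y) ?_ ?_ ?_ ?_
    · intro τ hτ
      simp only [Finset.coe_filter, Set.mem_ofPred_eq, mem_FS, not_or] at hτ
      exact mem_FS.2 (hτ.1.conj1 hxy hA hB hτ.2.1 hτ.2.2)
    · intro τ hτ
      have hτ' := mem_FS.1 hτ
      simp only [Finset.coe_filter, Set.mem_ofPred_eq, mem_FS, not_or]
      exact ⟨hτ'.conj2 hxy hA hB, hτ'.conj3 hxy⟩
    · intro τ _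
      ext v; simp
    · intro τ _
      ext v; simp
  have e2 : ((FS (insert y A) (insert x B)).filter (fun τ => τ x = y ∨ τ y = x)).card =
      (FS (insert y A) B ∪ (FS A (insert x B) ∪ FS A B)).card := by
    refine Finset.card_nbij' (fun τ => Equiv.swap x y * τ)
      (fun τ => Equiv.swap x y * τ) ?_ ?_ ?_ ?_
    · intro τ hτ
      simp only [Finset.coe_filter, Set.mem_ofPred_eq, mem_FS] at hτ
      obtain ⟨h, h'⟩ := hτ
      simp only [Finset.coe_union, Set.mem_union, Finset.mem_coe, mem_FS]
      by_cases h1 : τ x = y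
      · by_cases h2 : τ y = x
        · exact Or.inr (Or.inr (h.mul3 hxy hA hB h1 h2))
        · exact Or.inl (h.mul1 hxy hA hB h1 h2)
      · exact Or.inr (Or.inl (h.mul2 hxy hA hB h1 (by tauto)))
    · intro τ hτ
      simp only [Finset.coe_union, Set.mem_union, Finset.mem_coe, mem_FS] at hτ
      simp only [Finset.coe_filter, Set.mem_ofPred_eq, mem_FS]
      exact PP.back hxy hA hB hτ
    · intro τ _
      ext v; simp
    · intro τ _
      ext v; simp
  have d1 : insert y A ≠ A := fun h => nyA (h ▸ Finset.mem_insert_self y A)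
  have d2 : insert x B ≠ B := fun h => nxB (h ▸ Finset.mem_insert_self x B)
  rw [e1, e2, Finset.card_union_of_disjoint, Finset.card_union_of_disjoint]
  · ring
  · exact FS_disj (Or.inr d2)
  · rw [Finset.disjoint_union_right]
    exact ⟨FS_disj (Or.inl d1), FS_disj (Or.inl d1)⟩

lemma PP_base {A B : Finset (Fin n)} (hAB : Disjoint A B) (h : ∀ b ∈ B, ∀ a ∈ A, ¬ b < a)
    (τ : Equiv.Perm (Fin n)) (hτ : PP A B τ) : A = ∅ ∧ B = ∅ := by
  rw [← Finset.union_eq_empty]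
  by_contra hne
  have hne := Finset.nonempty_iff_ne_empty.2 hne
  have key : ∀ v ∈ A ∪ B, τ v ∈ A ∪ B := by
    intro v hv
    have h1 := hτ v
    have h2 := hτ (τ v)
    have i := τ.injective.eq_iff (a := τ v) (b := v)
    rw [Finset.mem_union] at *
    by_contra hc
    grind
  have hm := Finset.min'_mem _ hne
  have hM := Finset.max'_mem _ hne
  set m := (A ∪ B).min' hne
  set M := (A ∪ B).max' hne
  have m1 : m ≤ τ m := Finset.min'_le _ _ (key m hm)
  have M1 : τ M ≤ M := Finset.le_max' _ _ (key M hM)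
  have m2 : m ≤ M := Finset.min'_le _ _ hM
  have t1 := hτ m
  have t2 := hτ M
  rw [Finset.disjoint_left] at hAB
  have mB : m ∈ B := by
    rcases Finset.mem_union.1 hm with h | h
    · exact absurd (t1.1.2 h) (not_lt.2 m1)
    · exact h
  have MA : M ∈ A := by
    rcases Finset.mem_union.1 hM with h | h
    · exact h
    · exact absurd (t2.2.2 h) (not_lt.2 M1)
  exact h m mB M MA (lt_of_le_of_ne m2 fun e => hAB MA (e ▸ mB))

open Classical in
lemma FS_base {A B : Finset (Fin n)} (hAB : Disjoint A B) (h : ∀ b ∈ B, ∀ a ∈ A, ¬ b < a) :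
    (FS A B).card = if A = ∅ ∧ B = ∅ then 1 else 0 := by
  split_ifs with h0
  · obtain ⟨rfl, rfl⟩ := h0
    rw [Finset.card_eq_one]
    refine ⟨1, ?_⟩
    ext τ
    rw [mem_FS, Finset.mem_singleton]
    constructor
    · intro hτ
      ext v
      have := hτ v
      simp only [Finset.notMem_empty, iff_false, not_lt] at this
      rw [le_antisymm this.2 this.1]; rfl
    · rintro rfl v
      simp
  · rw [Finset.card_eq_zero, Finset.eq_empty_iff_forall_notMem]
    intro τ hτ
    exact h0 (PP_base hAB h τ (mem_FS.1 hτ))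

open Classical in
lemma C_base {A B : Finset (Fin n)} (h : ∀ b ∈ B, ∀ a ∈ A, ¬ b < a) :
    C A B = if A = ∅ ∧ B = ∅ then 1 else 0 := by
  rw [C_rec, Finset.sum_eq_zero, add_zero]
  intro S hS
  refine Finset.sum_eq_zero fun T hT => ?_
  rw [Finset.mem_powerset] at hS hT
  rw [w, if_neg, zero_mul]
  rintro ⟨⟨s, hs⟩, ⟨t, ht⟩, hv⟩
  exact h t (hT ht) s (hS hs) (hv t ht s hs)

lemma exists_adj {A B : Finset (Fin n)} (hAB : Disjoint A B) {b a : Fin n} (hb : b ∈ B)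
    (ha : a ∈ A) (hba : b < a) : ∃ x y A' B', x < y ∧ Gap x y A' ∧ Gap x y B' ∧
      Disjoint A' B' ∧ A = insert y A' ∧ B = insert x B' := by
  have hne : ((B ×ˢ A).filter (fun p => p.1 < p.2)).Nonempty := ⟨(b, a), by simp [*]⟩
  obtain ⟨⟨x, y⟩, hp, hmin⟩ := Finset.exists_min_image _
    (fun p : Fin n × Fin n => p.2.val - p.1.val) hne
  simp only [Finset.mem_filter, Finset.mem_product, and_imp, Prod.forall] at hp hmin
  obtain ⟨⟨hx, hy⟩, hxy⟩ := hp
  have hd := Finset.disjoint_left.1 hAB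
  refine ⟨x, y, A.erase y, B.erase x, hxy, ?_, ?_, ?_, ?_, ?_⟩
  · intro z hz
    have hz' := Finset.mem_erase.1 hz
    have hzx : z ≠ x := fun e => hd hz'.2 (e ▸ hx)
    by_contra hc
    have := hmin x z hx hz'.2 (by omega)
    have := hz'.1
    omega
  · intro z hz
    have hz' := Finset.mem_erase.1 hz
    have hzx : z ≠ y := fun e => hd hy (e ▸ hz'.2)
    by_contra hc
    have := hmin z y hz'.2 hy (by omega)
    have := hz'.1
    omega
  · exact Finset.disjoint_of_subset_left (Finset.erase_subset _ _)
      (Finset.disjoint_of_subset_right (Finset.erase_subset _ _) hAB)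
  · rw [Finset.insert_erase hy]
  · rw [Finset.insert_erase hx]

lemma main (k : ℕ) : ∀ A B : Finset (Fin n), Disjoint A B →
    ∑ a ∈ A, (a.val + 1) + ∑ b ∈ B, (n - b.val) < k → (FS A B).card = C A B := by
  induction k with
  | zero => intro A B _ h; omega
  | succ k ih =>
    intro A B hAB hk
    by_cases h : ∀ b ∈ B, ∀ a ∈ A, ¬ b < a
    · rw [FS_base hAB h, C_base h]
    · push Not at h
      obtain ⟨b, hb, a, ha, hba⟩ := h
      obtain ⟨x, y, A', B', hxy, gA, gB, hd, rfl, rfl⟩ := exists_adj hAB hb ha hba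
      have nxA := gA.nx hxy
      have nxB := gB.nx hxy
      have nyA := gA.ny hxy
      have nyB := gB.ny hxy
      rw [Finset.sum_insert nyA, Finset.sum_insert nxB] at hk
      have hxy' : x.val < y.val := hxy
      rw [FS_swap hxy gA gB, C_swap hxy _ _ _ (Nat.lt_succ_self _) gA gB,
        ih (insert x A') (insert y B'), ih (insert y A') B', ih A' (insert x B'), ih A' B' hd]
      · omega
      · rw [Finset.disjoint_insert_right]; exact ⟨nxA, hd⟩
      · rw [Finset.sum_insert nxB]; omega
      · rw [Finset.disjoint_insert_left]; exact ⟨nyB, hd⟩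
      · rw [Finset.sum_insert nyA]; omega
      · rw [Finset.disjoint_insert_left, Finset.disjoint_insert_right, Finset.mem_insert]
        exact ⟨by rintro (h | h); exacts [hxy.ne h, nxB h], nyA, hd⟩
      · rw [Finset.sum_insert nxA, Finset.sum_insert nyB]; omega

lemma perm_card (A B : Finset (Fin n)) : Nat.card {σ : Equiv.Perm (Fin n) //
        Finset.univ.filter (fun x => σ.symm x < x) = A ∧
        Finset.univ.filter (fun x => x < σ.symm x) = B} = (FS A B).card := by
  rw [← Nat.card_eq_finsetCard]
  refine Nat.card_congr (Equiv.subtypeEquiv (Equiv.inv (Equiv.Perm (Fin n))) fun σ => ?_)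
  rw [mem_FS]
  simp only [PP, Finset.ext_iff, Finset.mem_filter, Finset.mem_univ, true_and, ← forall_and]
  rfl

end CompPerm

/-- Main counting theorem: permutations of `{1,…,n}` with prescribed set `A` of
over-diagonal values, set `B` of under-diagonal values (and everything else on the
diagonal) are equinumerous with ordered compositions `A = A₁ ∪ … ∪ A_k`,
`B = B₁ ∪ … ∪ B_k` into nonempty parts with `min Aᵢ > max Bᵢ` for all `i`.
A value `x` is over-diagonal for `σ` iff `σ⁻¹ x < x`, and under-diagonal iff
`σ⁻¹ x > x`. -/
theorem count_perms_with_given_over_under (n : ℕ) (A B : Finset (Fin n))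
    (hAB : Disjoint A B) :
    Nat.card {σ : Equiv.Perm (Fin n) //
        Finset.univ.filter (fun x => σ.symm x < x) = A ∧
        Finset.univ.filter (fun x => x < σ.symm x) = B} =
    Nat.card {L : List (Finset (Fin n) × Finset (Fin n)) //
        (∀ p ∈ L, p.1.Nonempty ∧ p.2.Nonempty ∧ ∀ b ∈ p.2, ∀ a ∈ p.1, b < a) ∧
        (L.map Prod.fst).Pairwise Disjoint ∧
        (L.map Prod.snd).Pairwise Disjoint ∧
        (L.map Prod.fst).foldr (· ∪ ·) ∅ = A ∧
        (L.map Prod.snd).foldr (· ∪ ·) ∅ = B} := by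
  rw [CompPerm.perm_card, CompPerm.main _ A B hAB (Nat.lt_succ_self _)]
  rfl
end

section
/- The Eulerian number E_{k,l} (the number of permutations of {1,...,k+l-1} with k ascents and l descents in the word (0,π(1),...,π(n),0)) equals the shifted multinomial N^{(-1)}_{k,l} = Σ (k+l)!/((k_1+l_1)!···(k_r+l_r)!) · (r-1)!/(r_1!···r_p!), summed over unordered vector partitions (k,l)=(k_1,l_1)+...+(k_r,l_r) with all k_i,l_i ≥ 1 and multiplicities r_1,...,r_p of identical parts. -/
/-- The fundamental `r`-part multinomial `N^{[r]}_{k,l}`: the number of unordered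
partitions of `{1,…,k+l}` into `r` bicolored sets, each carrying a number of reds
`kᵢ ≥ 1` with `lᵢ = |Sᵢ| - kᵢ ≥ 1`, with `Σ kᵢ = k` (hence `Σ lᵢ = l`).  A partition is
recorded as a finset of pairs `(Sᵢ, kᵢ)`. -/
noncomputable def Nfund (k l r : ℕ) : ℕ :=
  Nat.card {P : Finset (Finset (Fin (k + l)) × ℕ) //
    P.card = r ∧
    (∀ p ∈ P, 1 ≤ p.2 ∧ p.2 < p.1.card) ∧
    (P : Set (Finset (Fin (k + l)) × ℕ)).Pairwise (fun p q => Disjoint p.1 q.1) ∧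
    P.sup Prod.fst = Finset.univ ∧
    ∑ p ∈ P, p.2 = k}

/-- The shifted multinomial `N^{(s)}_{k,l} = Σ_{r ≥ max(-s,1)} (r+s)! · N^{[r]}_{k,l}`,
with `(r+s)!` interpreted as `0` when `r + s < 0`.  (All terms with `r > k + l`
vanish.) -/
noncomputable def Nshift (k l : ℕ) (s : ℤ) : ℕ :=
  ∑ r ∈ Finset.Icc 1 (k + l),
    (if 0 ≤ (r : ℤ) + s then ((r : ℤ) + s).toNat.factorial else 0) * Nfund k l r

/-- The bordered word `(0, π(1), …, π(n), 0)` of a permutation `π` of `Fin n`: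
`word π j` is `π(j)` (1-indexed, with values in `{1,…,n}`) for `1 ≤ j ≤ n`, and `0`
otherwise. -/
def word {n : ℕ} (π : Equiv.Perm (Fin n)) (j : ℕ) : ℕ :=
  if h : j - 1 < n ∧ 1 ≤ j then (π ⟨j - 1, h.1⟩).val + 1 else 0

/-- Number of ascents of `π` in the word `(0, π(1), …, π(n), 0)`. -/
def ascCount {n : ℕ} (π : Equiv.Perm (Fin n)) : ℕ :=
  ((Finset.range (n + 1)).filter fun j => word π j < word π (j + 1)).card

/-- Number of descents of `π` in the word `(0, π(1), …, π(n), 0)`. -/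
def descCount {n : ℕ} (π : Equiv.Perm (Fin n)) : ℕ :=
  ((Finset.range (n + 1)).filter fun j => word π (j + 1) < word π j).card

section Helpers

open Finset Polynomial

def GoodP {α : Type*} [DecidableEq α] (S : Finset α) (r : ℕ) (P : Finset (Finset α × ℕ)) : Prop :=
    P.card = r ∧
    (∀ p ∈ P, 1 ≤ p.2 ∧ p.2 < p.1.card) ∧
    (P : Set (Finset α × ℕ)).Pairwise (fun p q => Disjoint p.1 q.1) ∧
    P.sup Prod.fst = S

open Classical in
noncomputable def PartsP {α : Type*} [DecidableEq α] (S : Finset α) (r : ℕ) :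
    Finset (Finset (Finset α × ℕ)) :=
  ((S.powerset ×ˢ Finset.range S.card).powerset).filter (GoodP S r)

theorem mem_PartsP {α : Type*} [DecidableEq α] (S : Finset α) (r : ℕ) (P) :
    P ∈ PartsP S r ↔ GoodP S r P := by
  classical
  unfold PartsP
  rw [Finset.mem_filter, and_iff_right_iff_imp]
  rintro ⟨h1, h2, h3, h4⟩
  rw [Finset.mem_powerset]
  intro p hp
  have hle : p.1 ⊆ S := by
    rw [← h4]; exact Finset.le_sup (f := Prod.fst) hp
  have := Finset.card_le_card hle
  have := h2 p hp
  simp only [Finset.mem_product, Finset.mem_powerset, Finset.mem_range]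
  exact ⟨hle, by omega⟩

def pairsP {α : Type*} (S : Finset α) : Finset (Finset α × ℕ) :=
  (S.powerset ×ˢ Finset.range S.card).filter (fun p => 1 ≤ p.2 ∧ p.2 < p.1.card)

theorem mem_pairsP {α : Type*} (S : Finset α) (p) :
    p ∈ pairsP S ↔ p.1 ⊆ S ∧ 1 ≤ p.2 ∧ p.2 < p.1.card := by
  unfold pairsP
  simp only [Finset.mem_filter, Finset.mem_product, Finset.mem_powerset, Finset.mem_range]
  constructor
  · rintro ⟨⟨a, b⟩, c⟩; exact ⟨a, c⟩
  · rintro ⟨a, c⟩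
    have := Finset.card_le_card a
    exact ⟨⟨a, by omega⟩, c⟩

theorem good_erase {α : Type*} [DecidableEq α] {S : Finset α} {r : ℕ} {P} (h : GoodP S (r+1) P)
    {p} (hp : p ∈ P) : p ∈ pairsP S ∧ GoodP (S \ p.1) r (P.erase p) := by
  obtain ⟨h1, h2, h3, h4⟩ := h
  have hle : p.1 ⊆ S := by
    rw [← h4]; exact Finset.le_sup (f := Prod.fst) hp
  refine ⟨(mem_pairsP _ _).2 ⟨hle, h2 p hp⟩, ?_, ?_, ?_, ?_⟩
  · rw [Finset.card_erase_of_mem hp]; omega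
  · intro q hq; exact h2 q (Finset.mem_of_mem_erase hq)
  · exact h3.mono (by simp)
  · ext x
    rw [← h4]
    simp only [Finset.mem_sup, Finset.mem_sdiff, Finset.mem_erase]
    constructor
    · rintro ⟨q, ⟨hq, hq'⟩, hx⟩
      refine ⟨⟨q, hq', hx⟩, fun hxp => ?_⟩
      exact Finset.disjoint_left.1 (h3 hq' hp hq) hx hxp
    · rintro ⟨⟨q, hq, hx⟩, hxp⟩
      refine ⟨q, ⟨?_, hq⟩, hx⟩
      rintro rfl; exact hxp hx

theorem good_insert {α : Type*} [DecidableEq α] {S : Finset α} {r : ℕ} {Q} {p}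
    (hp : p ∈ pairsP S) (h : GoodP (S \ p.1) r Q) : p ∉ Q ∧ GoodP S (r+1) (insert p Q) := by
  obtain ⟨h1, h2, h3, h4⟩ := h
  obtain ⟨g1, g2⟩ := (mem_pairsP _ _).1 hp
  have hd : ∀ q ∈ Q, Disjoint p.1 q.1 := by
    intro q hq
    have : q.1 ⊆ S \ p.1 := by
      rw [← h4]; exact Finset.le_sup (f := Prod.fst) hq
    exact (Finset.disjoint_of_subset_left this Finset.sdiff_disjoint).symm
  have hn : p ∉ Q := by
    intro hq
    have := hd p hq
    rw [disjoint_self] at this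
    rw [this] at g2
    simp at g2
  refine ⟨hn, ?_, ?_, ?_, ?_⟩
  · rw [Finset.card_insert_of_notMem hn, h1]
  · intro q hq
    rcases Finset.mem_insert.1 hq with rfl | hq
    · exact g2
    · exact h2 q hq
  · rw [Finset.coe_insert, Set.pairwise_insert_of_symm]
    exact ⟨h3, fun q hq _ => hd q hq⟩
  · rw [Finset.sup_insert, h4]
    simpa using g1

noncomputable def CP {α : Type*} [DecidableEq α] (S : Finset α) (r : ℕ) : ℚ[X] :=
  ∑ P ∈ PartsP S r, X ^ (∑ p ∈ P, p.2)

noncomputable def bP (n : ℕ) : ℚ[X] := ∑ j ∈ Finset.Ico 1 n, X ^ j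

theorem CP_rec {α : Type*} [DecidableEq α] (S : Finset α) (r : ℕ) :
    ((r + 1 : ℕ) : ℚ[X]) * CP S (r+1) = ∑ T ∈ S.powerset, bP T.card * CP (S \ T) r := by
  have e1 : ((r + 1 : ℕ) : ℚ[X]) * CP S (r+1) =
      ∑ P ∈ PartsP S (r+1), ∑ p ∈ P, X ^ (∑ p ∈ P, p.2) := by
    unfold CP
    rw [Finset.mul_sum]
    refine Finset.sum_congr rfl fun P hP => ?_
    rw [Finset.sum_const, ((mem_PartsP _ _ _).1 hP).1, nsmul_eq_mul]
  have e2 : ∑ T ∈ S.powerset, bP T.card * CP (S \ T) r =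
      ∑ p ∈ pairsP S, ∑ Q ∈ PartsP (S \ p.1) r, X ^ (p.2 + ∑ q ∈ Q, q.2) := by
    unfold bP CP
    have : ∀ T : Finset α, ((∑ j ∈ Finset.Ico 1 T.card, X ^ j) *
        ∑ P ∈ PartsP (S \ T) r, X ^ (∑ p ∈ P, p.2) : ℚ[X]) =
        ∑ j ∈ Finset.Ico 1 T.card, ∑ Q ∈ PartsP (S \ T) r, X ^ (j + ∑ q ∈ Q, q.2) := by
      intro T
      rw [Finset.sum_mul]
      refine Finset.sum_congr rfl fun j _ => ?_
      rw [Finset.mul_sum]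
      simp only [pow_add]
    simp only [this]
    rw [Finset.sum_sigma']
    refine Finset.sum_bij' (fun x _ => (x.1, x.2)) (fun x _ => ⟨x.1, x.2⟩) ?_ ?_ ?_ ?_ ?_
    · rintro ⟨T, j⟩ h
      simp only [Finset.mem_sigma, Finset.mem_powerset, Finset.mem_Ico] at h
      exact (mem_pairsP _ _).2 h
    · rintro ⟨T, j⟩ h
      simp only [Finset.mem_sigma, Finset.mem_powerset, Finset.mem_Ico]
      exact (mem_pairsP _ _).1 h
    · intros; rfl
    · intros; rfl
    · intros; rfl
  rw [e1, e2, Finset.sum_sigma', Finset.sum_sigma']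
  refine Finset.sum_bij' (fun x _ => ⟨x.2, x.1.erase x.2⟩) (fun x _ => ⟨insert x.1 x.2, x.1⟩)
    ?_ ?_ ?_ ?_ ?_
  · rintro ⟨P, p⟩ h
    simp only [Finset.mem_sigma, mem_PartsP] at h ⊢
    exact good_erase h.1 h.2
  · rintro ⟨p, Q⟩ h
    simp only [Finset.mem_sigma, mem_PartsP] at h ⊢
    exact ⟨(good_insert h.1 h.2).2, Finset.mem_insert_self _ _⟩
  · rintro ⟨P, p⟩ h
    simp only [Finset.mem_sigma, mem_PartsP] at h
    simp [Finset.insert_erase h.2]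
  · rintro ⟨p, Q⟩ h
    simp only [Finset.mem_sigma, mem_PartsP] at h
    simp [Finset.erase_insert (good_insert h.1 h.2).1]
  · rintro ⟨P, p⟩ h
    simp only [Finset.mem_sigma, mem_PartsP] at h
    simp only
    rw [Finset.add_sum_erase _ (fun q => q.2) h.2]

theorem CP_zero {α : Type*} [DecidableEq α] (S : Finset α) :
    CP S 0 = if S.card = 0 then 1 else 0 := by
  unfold CP
  split_ifs with h
  · rw [Finset.card_eq_zero] at h
    subst h
    have : PartsP (∅ : Finset α) 0 = {∅} := by
      ext P
      rw [mem_PartsP, Finset.mem_singleton]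
      constructor
      · intro h; exact Finset.card_eq_zero.1 h.1
      · rintro rfl; exact ⟨rfl, by simp, by simp, by simp⟩
    simp [this]
  · have : PartsP S 0 = ∅ := by
      ext P
      rw [mem_PartsP]
      simp only [Finset.notMem_empty, iff_false]
      rintro ⟨h1, -, -, h4⟩
      rw [Finset.card_eq_zero] at h1
      subst h1
      apply h
      rw [← h4]; simp
    simp [this]

noncomputable def BP : PowerSeries ℚ[X] :=
  PowerSeries.mk fun n => C ((n.factorial : ℚ)⁻¹) * bP n

theorem CP_eq {α : Type*} [DecidableEq α] (r : ℕ) : ∀ (S : Finset α),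
    CP S r = C ((S.card.factorial : ℚ) / r.factorial) * PowerSeries.coeff S.card (BP ^ r) := by
  induction r with
  | zero =>
    intro S
    rw [CP_zero, pow_zero, PowerSeries.coeff_one]
    split_ifs with h
    · simp [h]
    · simp
  | succ r ih =>
    intro S
    have h := CP_rec S r
    have h1 : ∑ T ∈ S.powerset, bP T.card * CP (S \ T) r =
      C ((S.card.factorial : ℚ) / r.factorial) * PowerSeries.coeff S.card (BP ^ (r+1)) := by
      have : ∀ T ∈ S.powerset, bP T.card * CP (S \ T) r =
        (fun m => bP m * (C (((S.card - m).factorial : ℚ) / r.factorial) *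
          PowerSeries.coeff (S.card - m) (BP ^ r))) T.card := by
        intro T hT
        simp only
        rw [ih, Finset.card_sdiff_of_subset (Finset.mem_powerset.1 hT)]
      rw [Finset.sum_congr rfl this, Finset.sum_powerset_apply_card (fun m => bP m * (C (((S.card - m).factorial : ℚ) / r.factorial) *
          PowerSeries.coeff (S.card - m) (BP ^ r))), pow_succ', PowerSeries.coeff_mul,
        Finset.Nat.sum_antidiagonal_eq_sum_range_succ_mk, Finset.mul_sum]
      refine Finset.sum_congr rfl fun m hm => ?_
      have hm' : m ≤ S.card := by simpa [Nat.lt_succ_iff] using hm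
      simp only
      rw [show PowerSeries.coeff m BP = C ((m.factorial : ℚ)⁻¹) * bP m by simp [BP], ← Nat.choose_mul_factorial_mul_factorial hm', nsmul_eq_mul]
      have : (m.factorial : ℚ) ≠ 0 := by positivity
      have e : C (((S.card.choose m * m.factorial * (S.card - m).factorial : ℕ) : ℚ) / r.factorial) *
         C ((m.factorial : ℚ)⁻¹) = ((S.card.choose m : ℕ) : ℚ[X]) *
          C (((S.card - m).factorial : ℚ) / r.factorial) := by
        rw [← C_eq_natCast, ← C_mul, ← C_mul]
        congr 1
        push_cast
        field_simp
      generalize PowerSeries.coeff (S.card - m) (BP ^ r) = z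
      linear_combination (- bP m * z) * e
    rw [h1] at h
    have hr : ((r + 1 : ℕ) : ℚ[X]) ≠ 0 := by exact_mod_cast Nat.succ_ne_zero r
    apply mul_left_cancel₀ hr
    rw [h, ← mul_assoc]
    congr 1
    rw [← C_eq_natCast (R := ℚ), ← C_mul]
    congr 1
    rw [Nat.factorial_succ]
    have : (r.factorial : ℚ) ≠ 0 := by positivity
    push_cast
    field_simp

/-- insertion of the maximum at position `p`. -/
def insP {n : ℕ} (p : Fin (n+1)) (σ : Equiv.Perm (Fin n)) : Equiv.Perm (Fin (n+1)) :=
  (finSuccEquiv' p).trans ((Equiv.optionCongr σ).trans (finSuccEquiv' (Fin.last n)).symm)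

theorem insP_self {n : ℕ} (p : Fin (n+1)) (σ : Equiv.Perm (Fin n)) : insP p σ p = Fin.last n := by
  simp [insP]

theorem insP_succAbove {n : ℕ} (p : Fin (n+1)) (σ : Equiv.Perm (Fin n)) (i : Fin n) :
    insP p σ (p.succAbove i) = (σ i).castSucc := by
  simp [insP]

theorem insP_bij (n : ℕ) : Function.Bijective
    (fun x : Fin (n+1) × Equiv.Perm (Fin n) => insP x.1 x.2) := by
  rw [Fintype.bijective_iff_injective_and_card]
  constructor
  · rintro ⟨p, σ⟩ ⟨q, τ⟩ h
    simp only at h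
    have hpq : p = q := by
      apply (insP p σ).injective
      rw [insP_self, h, insP_self]
    subst hpq
    congr 1
    ext i
    have := congrArg (fun f => f (p.succAbove i)) h
    simp only [insP_succAbove] at this
    exact congrArg Fin.val (Fin.castSucc_injective _ this)
  · simp [Fintype.card_perm, Nat.factorial_succ]

theorem word_zero {n : ℕ} (π : Equiv.Perm (Fin n)) : word π 0 = 0 := by simp [word]

theorem word_succ {n : ℕ} (π : Equiv.Perm (Fin n)) (i : Fin n) : word π (i.val + 1) = (π i).val + 1 := by
  simp [word]

theorem word_last {n : ℕ} (π : Equiv.Perm (Fin n)) (j : ℕ) (h : n < j) : word π j = 0 := by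
  unfold word
  rw [dif_neg]; omega

theorem word_le {n : ℕ} (π : Equiv.Perm (Fin n)) (j : ℕ) : word π j ≤ n := by
  unfold word
  split_ifs
  · exact (π _).isLt
  · omega

theorem word_ins_lt {n : ℕ} (p : Fin (n+1)) (σ : Equiv.Perm (Fin n)) (j : ℕ) (h : j ≤ p) :
    word (insP p σ) j = word σ j := by
  rcases j with _ | j
  · simp [word_zero]
  · have hj : j < n := by omega
    have h1 := word_succ (insP p σ) (p.succAbove ⟨j, hj⟩)
    rw [insP_succAbove, Fin.succAbove_of_castSucc_lt _ _ (by rw [Fin.lt_def]; simpa using h)] at h1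
    have h2 := word_succ σ ⟨j, hj⟩
    simpa [← h2] using h1

theorem word_ins_eq {n : ℕ} (p : Fin (n+1)) (σ : Equiv.Perm (Fin n)) :
    word (insP p σ) (p + 1) = n + 1 := by
  rw [word_succ, insP_self]; simp

theorem word_ins_gt {n : ℕ} (p : Fin (n+1)) (σ : Equiv.Perm (Fin n)) (j : ℕ) (h : p < j) :
    word (insP p σ) (j + 1) = word σ j := by
  by_cases hj : n < j
  · rw [word_last _ _ hj, word_last _ _ (by omega)]
  · obtain ⟨j, rfl⟩ : ∃ i, j = i + 1 := ⟨j - 1, by omega⟩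
    have hj' : j < n := by omega
    have h1 := word_succ (insP p σ) (p.succAbove ⟨j, hj'⟩)
    rw [insP_succAbove, Fin.succAbove_of_le_castSucc _ _ (by rw [Fin.le_def]; simp; omega)] at h1
    have h2 := word_succ σ ⟨j, hj'⟩
    simpa [← h2] using h1

theorem asc_sum {n : ℕ} (π : Equiv.Perm (Fin n)) : ascCount π =
    ∑ j ∈ Finset.range (n+1), if word π j < word π (j+1) then 1 else 0 := by
  unfold ascCount
  rw [Finset.card_filter]

theorem asc_ins {n : ℕ} (p : Fin (n+1)) (σ : Equiv.Perm (Fin n)) :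
    ascCount (insP p σ) = ascCount σ + if word σ p < word σ (p+1) then 0 else 1 := by
  rw [asc_sum, asc_sum]
  have hp := p.isLt
  obtain ⟨m, hm⟩ : ∃ m, n + 1 = p + 1 + m := ⟨n - p, by omega⟩
  rw [show Finset.range (n + 1 + 1) = Finset.range (p + 1 + 1 + m) by congr 1; omega,
    show Finset.range (n + 1) = Finset.range (p + 1 + m) by congr 1, Finset.sum_range_add, Finset.sum_range_add _ (p.val+1) m,
    Finset.sum_range_succ, Finset.sum_range_succ, Finset.sum_range_succ]
  have e1 : ∀ j ∈ Finset.range p.val, (if word (insP p σ) j < word (insP p σ) (j+1) then 1 else 0) =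
      if word σ j < word σ (j+1) then 1 else 0 := by
    intro j hj
    have := Finset.mem_range.1 hj
    rw [word_ins_lt _ _ _ (by omega), word_ins_lt _ _ _ (by omega)]
  have e2 : ∀ j ∈ Finset.range m, (if word (insP p σ) (p+1+1+j) < word (insP p σ) (p+1+1+j+1) then 1 else 0) =
      if word σ (p+1+j) < word σ (p+1+j+1) then 1 else 0 := by
    intro j hj
    rw [show p.val+1+1+j = (p+1+j) + 1 by omega, word_ins_gt _ _ _ (by omega), word_ins_gt _ _ _ (by omega)]
  rw [Finset.sum_congr rfl e1, Finset.sum_congr rfl e2, word_ins_eq, word_ins_lt _ _ _ le_rfl,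
    word_ins_gt _ _ _ (by omega)]
  have := word_le σ p
  have := word_le σ (p+1)
  rw [if_pos (by omega), if_neg (by omega)]
  split_ifs <;> omega

noncomputable def AP (n : ℕ) : ℚ[X] := ∑ π : Equiv.Perm (Fin n), X ^ ascCount π

theorem AP_rec (n : ℕ) : AP (n+1) = X * derivative (AP n) + ((n+1 : ℕ) : ℚ[X]) * X * AP n
    - X^2 * derivative (AP n) := by
  unfold AP
  rw [← (insP_bij n).sum_comp (fun π => (X : ℚ[X]) ^ ascCount π), Fintype.sum_prod_type, Finset.sum_comm]
  rw [derivative_sum, Finset.mul_sum, Finset.mul_sum, Finset.mul_sum, ← Finset.sum_add_distrib,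
    ← Finset.sum_sub_distrib]
  refine Finset.sum_congr rfl fun σ _ => ?_
  simp only [asc_ins, pow_add, ← Finset.mul_sum]
  have h0 : (∑ p : Fin (n+1), (X : ℚ[X]) ^ (if word σ p < word σ (p+1) then 0 else 1)) =
      (ascCount σ : ℚ[X]) + (((n+1 : ℕ) : ℚ[X]) - (ascCount σ : ℚ[X])) * X := by
    rw [Fin.sum_univ_eq_sum_range (fun p => (X : ℚ[X]) ^ (if word σ p < word σ (p+1) then 0 else 1)),
      asc_sum]
    have : ∀ j ∈ Finset.range (n+1), (X : ℚ[X]) ^ (if word σ j < word σ (j+1) then 0 else 1) =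
        ((if word σ j < word σ (j+1) then 1 else 0 : ℕ) : ℚ[X]) +
        (1 - ((if word σ j < word σ (j+1) then 1 else 0 : ℕ) : ℚ[X])) * X := by
      intro j _
      split_ifs <;> simp
    rw [Finset.sum_congr rfl this, Finset.sum_add_distrib, ← Finset.sum_mul, Finset.sum_sub_distrib,
      Nat.cast_sum]
    simp
  rw [h0, derivative_X_pow]
  rcases Nat.eq_zero_or_pos (ascCount σ) with h | h
  · simp [h]
  · obtain ⟨m, hm⟩ : ∃ m, ascCount σ = m + 1 := ⟨ascCount σ - 1, by omega⟩
    rw [hm]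
    simp
    ring

theorem asc_add_desc {n : ℕ} (hn : 1 ≤ n) (π : Equiv.Perm (Fin n)) : ascCount π + descCount π = n + 1 := by
  have h : descCount π = ((Finset.range (n + 1)).filter fun j => ¬ word π j < word π (j + 1)).card := by
    unfold descCount
    congr 1
    apply Finset.filter_congr
    intro j hj
    have hj := Finset.mem_range.1 hj
    have : word π j ≠ word π (j+1) := by
      rcases j with _ | j
      · rw [word_zero]
        have := word_succ π ⟨0, hn⟩
        simp only at this
        omega
      · have h1 := word_succ π ⟨j, by omega⟩
        simp only at h1
        by_cases h : j + 1 = n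
        · rw [word_last π (j+1+1) (by omega)]; omega
        · have h2 := word_succ π ⟨j+1, by omega⟩
          simp only at h2
          rw [h1, h2]
          intro h3
          have := π.injective (Fin.ext (Nat.succ_injective h3))
          simp at this
    omega
  rw [h]
  unfold ascCount
  rw [Finset.card_filter_add_card_filter_not, Finset.card_range]

noncomputable def D0lin : PowerSeries ℚ[X] →ₗ[ℚ] PowerSeries ℚ[X] where
  toFun f := PowerSeries.mk fun n => derivative (PowerSeries.coeff n f)
  map_add' f g := by ext1 n; simp
  map_smul' c f := by
    ext1 n
    simp

noncomputable def D0 : Derivation ℚ (PowerSeries ℚ[X]) (PowerSeries ℚ[X]) :=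
  Derivation.mk' D0lin (by
    intro f g
    ext1 n
    simp only [D0lin, LinearMap.coe_mk, AddHom.coe_mk, PowerSeries.coeff_mk, smul_eq_mul, map_add,
      PowerSeries.coeff_mul, derivative_sum, derivative_mul]
    rw [← Finset.Nat.sum_antidiagonal_swap (n := n)
      (f := fun x => PowerSeries.coeff x.1 g * derivative (PowerSeries.coeff x.2 f)),
      ← Finset.sum_add_distrib]
    refine Finset.sum_congr rfl fun x _ => ?_
    simp only [Prod.fst_swap, Prod.snd_swap]
    ring)

theorem coeff_D0 (f : PowerSeries ℚ[X]) (n : ℕ) :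
    PowerSeries.coeff n (D0 f) = derivative (PowerSeries.coeff n f) := by
  simp [D0, D0lin]

theorem der_leib {R : Type*} [CommRing R] (f g : PowerSeries R) :
    PowerSeries.derivative R (f * g) =
      f * PowerSeries.derivative R g + g * PowerSeries.derivative R f :=
  (PowerSeries.derivative R).leibniz f g

noncomputable def dtlin : PowerSeries ℚ[X] →ₗ[ℚ] PowerSeries ℚ[X] where
  toFun f := PowerSeries.derivative ℚ[X] f
  map_add' f g := by simp
  map_smul' c f := by
    ext1 n
    simp [PowerSeries.coeff_derivative]

noncomputable def dtP : Derivation ℚ (PowerSeries ℚ[X]) (PowerSeries ℚ[X]) :=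
  Derivation.mk' dtlin (by
    intro f g
    exact der_leib f g)

theorem coeff_dtP (f : PowerSeries ℚ[X]) (n : ℕ) :
    PowerSeries.coeff n (dtP f) = PowerSeries.coeff (n+1) f * (n+1) := by
  simp [dtP, dtlin, PowerSeries.coeff_derivative]

noncomputable def EE : Derivation ℚ (PowerSeries ℚ[X]) (PowerSeries ℚ[X]) :=
  dtP - (PowerSeries.C (X - X^2 : ℚ[X])) • D0 - (PowerSeries.C (X : ℚ[X]) * PowerSeries.X) • dtP

theorem coeff_X_dtP (f : PowerSeries ℚ[X]) (n : ℕ) :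
    PowerSeries.coeff n (PowerSeries.X * dtP f) = (n : ℚ[X]) * PowerSeries.coeff n f := by
  rcases n with _ | n
  · simp
  · rw [PowerSeries.coeff_succ_X_mul, coeff_dtP]; push_cast; ring

theorem coeff_EE (f : PowerSeries ℚ[X]) (n : ℕ) :
    PowerSeries.coeff n (EE f) = PowerSeries.coeff (n+1) f * ((n : ℚ[X])+1)
      - (X - X^2) * derivative (PowerSeries.coeff n f) - X * ((n : ℚ[X]) * PowerSeries.coeff n f) := by
  simp only [EE, Derivation.sub_apply, Derivation.smul_apply, smul_eq_mul, map_sub, mul_assoc,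
    PowerSeries.coeff_C_mul, coeff_X_dtP, coeff_dtP, coeff_D0, sub_mul]

theorem bP_zero : bP 0 = 0 := by simp [bP]
theorem bP_one : bP 1 = 0 := by simp [bP]
theorem bP_succ (n : ℕ) (hn : 1 ≤ n) : bP (n+1) = bP n + X ^ n := by
  unfold bP; rw [Finset.sum_Ico_succ_top hn]

theorem bP_rec (n : ℕ) : bP (n+2) = (X - X^2) * derivative (bP (n+1)) + ((n+1 : ℕ) : ℚ[X]) * X * bP (n+1)
    + (if n = 0 then X else 0) - ((n+1 : ℕ) : ℚ[X]) * X * bP n := by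
  induction n with
  | zero => simp [bP_zero, bP_one, bP_succ]
  | succ n ih =>
    rcases n with _ | n
    · simp [bP_one, bP_succ]
      ring
    · rw [if_neg (by omega)] at ih ⊢
      have e1 := bP_succ (n+1) (by omega)
      have e2 := bP_succ (n+1+1) (by omega)
      have e3 := bP_succ (n+1+1+1) (by omega)
      have d2 : derivative (bP (n+1+1+1)) = derivative (bP (n+1+1)) + ((n+2 : ℕ) : ℚ[X]) * X ^ (n+1) := by
        rw [e2]; simp
        ring
      have ih' : bP (n+1+1+1) = _ := ih
      rw [e3, d2]
      rw [e2, e1] at ih' ⊢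
      push_cast at ih' ⊢
      linear_combination ih'

theorem EE_BP : EE BP = PowerSeries.C (X : ℚ[X]) * (PowerSeries.X * (1 - BP)) := by
  ext1 n
  rw [coeff_EE, PowerSeries.coeff_C_mul]
  rcases n with _ | n
  · simp [BP, bP_zero, bP_one]
  · rw [PowerSeries.coeff_succ_X_mul, map_sub, PowerSeries.coeff_one]
    simp only [BP, PowerSeries.coeff_mk, bP_rec, derivative_mul, derivative_C]
    have h1 : C (((n+1+1).factorial : ℚ)⁻¹) * ((n + 1 : ℕ) + 1 : ℚ[X]) = C (((n+1).factorial : ℚ)⁻¹) := by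
      rw [Nat.factorial_succ (n+1), ← C_eq_natCast, ← C_1, ← C_add, ← C_mul]
      congr 1
      push_cast
      field_simp
    have h2 : C (((n+1).factorial : ℚ)⁻¹) * ((n + 1 : ℕ) : ℚ[X]) = C ((n.factorial : ℚ)⁻¹) := by
      rw [Nat.factorial_succ n, ← C_eq_natCast, ← C_mul]
      congr 1
      push_cast
      field_simp
    have h3 : C (((n+1).factorial : ℚ)⁻¹) * (if n = 0 then X else 0 : ℚ[X]) = X * if n = 0 then 1 else 0 := by
      split_ifs with h
      · simp [h]
      · simp
    generalize bP n = z at *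
    generalize bP (n+1) = w at *
    generalize C ((n.factorial : ℚ)⁻¹) = a at *
    generalize C (((n+1).factorial : ℚ)⁻¹) = b at *
    generalize C (((n+1+1).factorial : ℚ)⁻¹) = c at *
    linear_combination ((X - X ^ 2) * derivative w + ((n + 1 : ℕ) : ℚ[X]) * X * w + (if n = 0 then X else 0) - ((n + 1 : ℕ) : ℚ[X]) * X * z) * h1 + h3 - X * z * h2

noncomputable def FR (R : ℕ) : PowerSeries ℚ[X] :=
  ∑ r ∈ Finset.range R, (((r+1 : ℕ) : ℚ)⁻¹) • BP ^ (r+1)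

theorem EE_FR (R : ℕ) : EE (FR R) = PowerSeries.C (X : ℚ[X]) * (PowerSeries.X * (1 - BP ^ R)) := by
  have h : EE (FR R) = (∑ r ∈ Finset.range R, BP ^ r) * EE BP := by
    unfold FR
    rw [map_sum, Finset.sum_mul]
    refine Finset.sum_congr rfl fun r _ => ?_
    rw [Derivation.map_smul, Derivation.leibniz_pow, ← Nat.cast_smul_eq_nsmul ℚ, smul_smul,
      inv_mul_cancel₀ (by positivity), one_smul]
    simp
  rw [h, EE_BP, ← geom_sum_mul_neg BP R]
  ring

theorem coeff_BP_pow (R n : ℕ) (h : n < R) : PowerSeries.coeff n (BP ^ R) = 0 := by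
  have h1 : (PowerSeries.X : PowerSeries ℚ[X]) ∣ BP := by
    rw [PowerSeries.X_dvd_iff]
    simp [BP, ← PowerSeries.coeff_zero_eq_constantCoeff_apply, bP_zero]
  exact PowerSeries.X_pow_dvd_iff.1 (pow_dvd_pow_of_dvd h1 R) n h

noncomputable def gP (R n : ℕ) : ℚ[X] := C (n.factorial : ℚ) * PowerSeries.coeff n (FR R)

theorem gP_rec (R n : ℕ) (h : n < R) : gP R (n+2) = (X - X^2) * derivative (gP R (n+1)) +
    ((n+1 : ℕ) : ℚ[X]) * X * gP R (n+1) + if n = 0 then X else 0 := by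
  have e := congrArg (PowerSeries.coeff (n+1)) (EE_FR R)
  rw [coeff_EE, PowerSeries.coeff_C_mul, PowerSeries.coeff_succ_X_mul, map_sub, PowerSeries.coeff_one,
    coeff_BP_pow R n h, sub_zero] at e
  have h3 : C ((n+1).factorial : ℚ) * (if n = 0 then 1 else 0 : ℚ[X]) = if n = 0 then 1 else 0 := by
    split_ifs with h
    · simp [h]
    · simp
  have h4 : (if n = 0 then X else 0 : ℚ[X]) = X * if n = 0 then 1 else 0 := by
    split_ifs <;> simp
  have h1 : C ((n+1+1).factorial : ℚ) = C ((n+1).factorial : ℚ) * ((n + 1 : ℕ) + 1 : ℚ[X]) := by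
    rw [Nat.factorial_succ (n+1), ← C_eq_natCast, ← C_1, ← C_add, ← C_mul]
    congr 1
    push_cast
    ring
  unfold gP
  simp only [derivative_mul, derivative_C]
  rw [h4, h1, ← h3]
  linear_combination C ((n+1).factorial : ℚ) * e

theorem gP_one (R : ℕ) : gP R 1 = 0 := by
  have e := congrArg (PowerSeries.coeff 0) (EE_FR R)
  rw [coeff_EE, PowerSeries.coeff_C_mul] at e
  have h0 : PowerSeries.coeff 0 (FR R) = 0 := by
    simp [FR, BP, bP_zero]
  rw [h0] at e
  simp at e
  simp [gP, e]

theorem AP_zero : AP 0 = 1 := by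
  unfold AP
  rw [Fintype.sum_unique]
  have : ascCount (default : Equiv.Perm (Fin 0)) = 0 := by
    unfold ascCount
    simp [word]
  rw [this, pow_zero]

theorem AP_eq_gP (R n : ℕ) (h : n < R) : AP (n+1) = gP R (n+2) := by
  induction n with
  | zero =>
    rw [AP_rec, AP_zero, gP_rec R 0 h, gP_one]
    simp
  | succ n ih =>
    rw [AP_rec, gP_rec R (n+1) h, ih (by omega), if_neg (by omega)]
    ring

theorem card_eq_coeff (k l : ℕ) (hk : 1 ≤ k) (hl : 1 ≤ l) :
    (Nat.card {π : Equiv.Perm (Fin (k + l - 1)) // ascCount π = k ∧ descCount π = l} : ℚ) =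
      (AP (k + l - 1)).coeff k := by
  have h : ∀ π : Equiv.Perm (Fin (k + l - 1)), (ascCount π = k ∧ descCount π = l) ↔ k = ascCount π := by
    intro π
    have := asc_add_desc (by omega) π
    omega
  simp only [h]
  rw [Nat.card_eq_fintype_card, Fintype.card_subtype, Finset.card_filter]
  unfold AP
  simp [coeff_X_pow]

theorem Nfund_eq_coeff (k l r : ℕ) :
    (Nfund k l r : ℚ) = (CP (Finset.univ : Finset (Fin (k + l))) r).coeff k := by
  have h : Nfund k l r = ((PartsP (Finset.univ : Finset (Fin (k + l))) r).filter
      (fun P => k = ∑ p ∈ P, p.2)).card := by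
    unfold Nfund
    refine Nat.subtype_card _ fun P => ?_
    rw [Finset.mem_filter, mem_PartsP]
    unfold GoodP
    constructor
    · rintro ⟨⟨h1, h2, h3, h4⟩, h5⟩
      exact ⟨h1, h2, h3, h4, h5.symm⟩
    · rintro ⟨h1, h2, h3, h4, h5⟩
      exact ⟨⟨h1, h2, h3, h4⟩, h5.symm⟩
  rw [h, Finset.card_filter]
  unfold CP
  simp [coeff_X_pow]

theorem Nshift_eq_coeff (k l : ℕ) : (Nshift k l (-1) : ℚ) = (gP (k + l) (k + l)).coeff k := by
  unfold Nshift gP FR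
  rw [Finset.range_eq_Ico, Finset.sum_Ico_add' (fun r : ℕ => ((r : ℚ)⁻¹) • BP ^ r) 0 (k+l) 1]
  rw [map_sum, Finset.mul_sum, finsetSum_coeff, Nat.cast_sum]
  refine Finset.sum_congr (by ext; simp) fun r hr => ?_
  have hr1 : 1 ≤ r := (Finset.mem_Icc.1 hr).1
  rw [if_pos (by omega), show ((r : ℤ) + (-1)).toNat = r - 1 by omega, Nat.cast_mul, Nfund_eq_coeff,
    CP_eq, Finset.card_univ, Fintype.card_fin]
  obtain ⟨m, rfl⟩ : ∃ m, r = m + 1 := ⟨r - 1, by omega⟩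
  rw [Nat.add_sub_cancel, coeff_C_mul, coeff_C_mul, Nat.factorial_succ]
  have : (m.factorial : ℚ) ≠ 0 := by positivity
  simp
  field_simp

end Helpers

/-- The Eulerian number `E_{k,l}` — the number of permutations of `{1,…,k+l-1}` with `k`
ascents and `l` descents in the zero-bordered word — equals the shifted multinomial
`N^{(-1)}_{k,l}`. -/
theorem eulerian_eq_shifted_multinomial (k l : ℕ) (hk : 1 ≤ k) (hl : 1 ≤ l) :
    Nat.card {π : Equiv.Perm (Fin (k + l - 1)) // ascCount π = k ∧ descCount π = l} =
      Nshift k l (-1) := by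
  have h := AP_eq_gP (k + l) (k + l - 2) (by omega)
  rw [show k + l - 2 + 1 = k + l - 1 by omega, show k + l - 2 + 2 = k + l by omega] at h
  have : (Nat.card {π : Equiv.Perm (Fin (k + l - 1)) // ascCount π = k ∧ descCount π = l} : ℚ) =
      (Nshift k l (-1) : ℚ) := by
    rw [card_eq_coeff k l hk hl, Nshift_eq_coeff, h]
  exact_mod_cast this
end

section
/- The number D_{k,l} of derangements of {1,...,k+l} with exactly k values over the diagonal and l values under the diagonal equals N^{(0)}_{k,l} = Σ (k+l)!/((k_1+l_1)!···(k_r+l_r)!) · r!/(r_1!···r_p!), summed over unordered vector partitions (k,l)=(k_1,l_1)+...+(k_r,l_r) with all k_i,l_i ≥ 1 and multiplicities r_1,...,r_p of identical parts. -/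
section aux
open Finset
noncomputable section
abbrev PP := MvPolynomial (Fin 3) ℚ
def xx : PP := MvPolynomial.X 0
def yy : PP := MvPolynomial.X 1
def zz : PP := MvPolynomial.X 2
def del : Derivation ℚ PP PP := MvPolynomial.mkDerivation ℚ (fun _ => 1)
lemma del_x : del xx = 1 := by simp [del, xx]
lemma del_y : del yy = 1 := by simp [del, yy]
lemma del_z : del zz = 1 := by simp [del, zz]

def wt {n : ℕ} (i j : Fin n) : PP := if i < j then xx else if j < i then yy else zz

lemma del_wt {n : ℕ} (i j : Fin n) : del (wt i j) = 1 := by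
  unfold wt; split_ifs <;> simp [del_x, del_y, del_z]

def AA (n : ℕ) : PP := ∑ σ : Equiv.Perm (Fin n), ∏ i, wt i (σ i)

lemma del_prod {ι : Type} [DecidableEq ι] (s : Finset ι) (f : ι → PP) (h : ∀ i ∈ s, del (f i) = 1) :
    del (∏ i ∈ s, f i) = ∑ i ∈ s, ∏ j ∈ s.erase i, f j := by
  induction s using Finset.induction_on with
  | empty => simp
  | insert a s ha ih =>
    rw [prod_insert ha, Derivation.leibniz, ih (fun i hi => h i (mem_insert_of_mem hi)),
      h a (mem_insert_self _ _), sum_insert ha, erase_insert ha]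
    simp only [smul_eq_mul, mul_one, mul_sum]
    rw [add_comm]
    congr 1
    apply sum_congr rfl
    intro i hi
    have : a ≠ i := by rintro rfl; exact ha hi
    rw [erase_insert_of_ne this, prod_insert (by simp [ha])]

lemma AA_succ (n : ℕ) : AA (n+1) = zz * AA n + xx * yy * del (AA n) := by
  unfold AA
  rw [← Equiv.sum_comp Equiv.Perm.decomposeFin.symm, Fintype.sum_prod_type, Fin.sum_univ_succ]
  congr 1
  · rw [mul_sum]
    apply sum_congr rfl
    intro e _
    rw [Fin.prod_univ_succ]
    simp [wt]
  · rw [map_sum, mul_sum, sum_comm]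
    apply sum_congr rfl
    intro e _
    rw [del_prod _ _ (fun i _ => del_wt _ _), ← Equiv.sum_comp e, mul_sum]
    apply sum_congr rfl
    intro i _
    rw [Fin.prod_univ_succ, ← mul_prod_erase univ _ (mem_univ i), mul_assoc]
    have h1 : wt 0 (Equiv.Perm.decomposeFin.symm ((e i).succ, e) 0) = xx := by
      simp [wt]
    have h2 : wt i.succ (Equiv.Perm.decomposeFin.symm ((e i).succ, e) i.succ) = yy := by
      simp [wt]
    rw [h1, h2]
    congr 2
    apply prod_congr rfl
    intro j hj
    rw [Equiv.Perm.decomposeFin_symm_apply_succ, Equiv.swap_apply_of_ne_of_ne]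
    · simp [wt]
    · exact Fin.succ_ne_zero _
    · simpa using hj

lemma AA_zero : AA 0 = 1 := by simp [AA]

def Del (f : PowerSeries PP) : PowerSeries PP := PowerSeries.mk fun n => del (PowerSeries.coeff n f)

lemma Del_mul (f g : PowerSeries PP) : Del (f * g) = Del f * g + f * Del g := by
  ext1 n
  simp only [Del, PowerSeries.coeff_mk, PowerSeries.coeff_mul, map_sum, Derivation.leibniz, map_add,
    smul_eq_mul]
  rw [← sum_add_distrib]
  apply sum_congr rfl
  intros; ring

def egf (a : ℕ → PP) : PowerSeries PP := PowerSeries.mk fun n => ((n.factorial : ℚ)⁻¹) • a n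

lemma deriv_egf (a : ℕ → PP) : PowerSeries.derivative PP (egf a) = egf (fun n => a (n+1)) := by
  ext1 n
  rw [PowerSeries.coeff_derivative]
  simp only [egf, PowerSeries.coeff_mk]
  rw [smul_mul_assoc, mul_comm, Nat.factorial_succ]
  have : ((n : PP) + 1) * a (n+1) = ((n : ℚ) + 1) • a (n+1) := by
    rw [MvPolynomial.smul_eq_C_mul]; simp
  rw [this, smul_smul]
  congr 1
  push_cast
  field_simp

lemma Del_egf (a : ℕ → PP) : Del (egf a) = egf (fun n => del (a n)) := by
  ext1 n
  simp [Del, egf]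

lemma X_egf (a : ℕ → PP) : PowerSeries.X * egf a = egf (fun n => (n : PP) * a (n-1)) := by
  ext1 n
  cases n with
  | zero => simp [egf]
  | succ n =>
    rw [PowerSeries.coeff_succ_X_mul]
    simp only [egf, PowerSeries.coeff_mk, Nat.add_sub_cancel]
    have : ((n+1 : ℕ) : PP) * a n = ((n : ℚ) + 1) • a n := by
      rw [MvPolynomial.smul_eq_C_mul]; simp
    rw [this, smul_smul]
    congr 1
    rw [Nat.factorial_succ]
    push_cast
    field_simp

lemma C_egf (c : PP) (a : ℕ → PP) : PowerSeries.C c * egf a = egf (fun n => c * a n) := by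
  ext1 n
  simp [egf]
lemma add_egf (a b : ℕ → PP) : egf a + egf b = egf (fun n => a n + b n) := by
  ext1 n
  simp [egf]
lemma sub_egf (a b : ℕ → PP) : egf a - egf b = egf (fun n => a n - b n) := by
  ext1 n
  simp [egf, smul_sub]

def GG (n : ℕ) : PP := xx * yy ^ n - yy * xx ^ n

lemma F_ode : PowerSeries.derivative PP (egf AA) =
    PowerSeries.C zz * egf AA + PowerSeries.C (xx * yy) * Del (egf AA) := by
  rw [deriv_egf, Del_egf, C_egf, C_egf, add_egf]
  congr 1; ext1 n; exact AA_succ n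

lemma G_ode : PowerSeries.derivative PP (egf GG) =
    PowerSeries.C (xx * yy) * (Del (egf GG) - PowerSeries.X * egf GG) := by
  rw [deriv_egf, Del_egf, X_egf, sub_egf, C_egf]
  congr 1; ext1 n
  simp only [GG, map_sub, Derivation.leibniz, Derivation.leibniz_pow, del_x, del_y, smul_eq_mul, nsmul_eq_mul]
  cases n with
  | zero => simp; ring
  | succ n => simp only [Nat.add_sub_cancel]; push_cast; ring

lemma H_ode : PowerSeries.derivative PP (egf AA * egf GG) =
    PowerSeries.C zz * (egf AA * egf GG) + PowerSeries.C (xx * yy) * 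
      (Del (egf AA * egf GG) - PowerSeries.X * (egf AA * egf GG)) := by
  rw [Derivation.leibniz, F_ode, G_ode, Del_mul]
  simp only [smul_eq_mul]
  ring

lemma cancel_nat (n : ℕ) (a b : PP) (h : a * ((n : PP) + 1) = b * ((n : PP) + 1)) : a = b := by
  refine mul_right_cancel₀ ?_ h
  exact_mod_cast Nat.succ_ne_zero n

/-- egf AA * egf GG and the exponential series satisfy the same recursion. -/
lemma ode_unique (f g : PowerSeries PP) (h0 : PowerSeries.coeff 0 f = PowerSeries.coeff 0 g)
    (hf : PowerSeries.derivative PP f = PowerSeries.C zz * f + PowerSeries.C (xx * yy) * 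
      (Del f - PowerSeries.X * f))
    (hg : PowerSeries.derivative PP g = PowerSeries.C zz * g + PowerSeries.C (xx * yy) * 
      (Del g - PowerSeries.X * g)) : f = g := by
  ext1 n
  induction n using Nat.strong_induction_on with
  | _ n ih =>
    cases n with
    | zero => exact h0
    | succ n =>
      have e1 := congrArg (PowerSeries.coeff n) hf
      have e2 := congrArg (PowerSeries.coeff n) hg
      rw [PowerSeries.coeff_derivative] at e1 e2
      apply cancel_nat n
      rw [e1, e2]
      simp only [map_add, map_sub, PowerSeries.coeff_C_mul, Del, PowerSeries.coeff_mk]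
      rw [ih n (by omega)]
      cases n with
      | zero => simp
      | succ n => simp only [PowerSeries.coeff_succ_X_mul]; rw [ih n (by omega)]

lemma H_eq : egf AA * egf GG = egf (fun n => (xx - yy) * zz ^ n) := by
  apply ode_unique
  · simp [egf, AA_zero, GG]
  · exact H_ode
  · rw [deriv_egf, Del_egf, X_egf, sub_egf, C_egf, C_egf, add_egf]
    congr 1; ext1 n
    simp only [map_sub, Derivation.leibniz, Derivation.leibniz_pow, del_x, del_y, del_z, smul_eq_mul, nsmul_eq_mul]
    cases n with
    | zero => simp; ring
    | succ n => simp only [Nat.add_sub_cancel]; push_cast; ring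

def ff (m : ℕ) : PP := ∑ j ∈ range (m - 1), xx ^ (j+1) * yy ^ (m - 1 - j)

lemma ff_eq (n : ℕ) : GG n = (xx - yy) * ((if n = 0 then 1 else 0) - ff n) := by
  cases n with
  | zero => simp [GG, ff]
  | succ n =>
    simp only [ff, GG, Nat.add_sub_cancel]
    have h : (∑ j ∈ range n, xx ^ (j+1) * yy ^ (n - j)) = xx * yy * ∑ j ∈ range n, xx ^ j * yy ^ (n - 1 - j) := by
      rw [mul_sum]
      apply sum_congr rfl
      intro j hj
      have := mem_range.1 hj
      obtain ⟨c, hc⟩ : ∃ c, n - j = c + 1 := ⟨n - j - 1, by omega⟩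
      rw [hc, show n - 1 - j = c by omega]; ring
    rw [h]
    have := (Commute.all xx yy).geom_sum₂_mul n
    simp only [Nat.succ_ne_zero, if_false]
    linear_combination (xx*yy) * this

lemma F_eq : egf AA * (1 - egf ff) = egf (fun n => zz ^ n) := by
  have h1 : egf GG = PowerSeries.C (xx - yy) * (1 - egf ff) := by
    have : (1 : PowerSeries PP) = egf (fun n => if n = 0 then 1 else 0) := by
      ext1 n
      by_cases h : n = 0 <;> simp [egf, PowerSeries.coeff_one, h]
    rw [this, sub_egf, C_egf]
    congr 1; ext1 n; exact ff_eq n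
  have h2 := H_eq
  rw [h1, ← C_egf] at h2
  have hne : PowerSeries.C (xx - yy) ≠ 0 := by
    intro h
    have h := congrArg (PowerSeries.coeff 0) h
    simp only [PowerSeries.coeff_zero_C, map_zero] at h
    have := MvPolynomial.X_injective (R := ℚ) (sub_eq_zero.1 h)
    exact absurd this (by decide)
  apply mul_left_cancel₀ hne
  rw [← h2]; ring

lemma AA_conv (n : ℕ) : AA n = zz ^ n + ∑ m ∈ range (n+1), (n.choose m : PP) * (ff m * AA (n - m)) := by
  have h := congrArg (PowerSeries.coeff n) F_eq
  rw [mul_sub, mul_one, mul_comm, map_sub, PowerSeries.coeff_mul,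
    Nat.sum_antidiagonal_eq_sum_range_succ_mk] at h
  simp only [egf, PowerSeries.coeff_mk] at h
  have h := congrArg (fun t => (n.factorial : ℚ) • t) h
  have hn : (n.factorial : ℚ) ≠ 0 := by exact_mod_cast n.factorial_ne_zero
  simp only [smul_sub, smul_smul, mul_inv_cancel₀ hn, one_smul, smul_sum] at h
  rw [sub_eq_iff_eq_add] at h
  rw [h]
  congr 1
  apply sum_congr rfl
  intro m hm
  have hm : m ≤ n := by have := mem_range.1 hm; omega
  rw [smul_mul_smul_comm, smul_smul]
  have : (n.choose m : PP) = MvPolynomial.C (n.choose m : ℚ) := by simp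
  rw [this, ← MvPolynomial.smul_eq_C_mul]
  congr 1
  rw [Nat.cast_choose ℚ hm]
  field_simp

def phi : PP →+* Polynomial ℚ := (MvPolynomial.aeval ![Polynomial.X, 1, 0] : PP →ₐ[ℚ] Polynomial ℚ).toRingHom

lemma phi_x : phi xx = Polynomial.X := by simp [phi, xx]
lemma phi_y : phi yy = 1 := by simp [phi, yy]
lemma phi_z : phi zz = 0 := by simp [phi, zz]

def aa (n : ℕ) : Polynomial ℚ := phi (AA n)
def gg (m : ℕ) : Polynomial ℚ := ∑ j ∈ Ico 1 m, Polynomial.X ^ j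

lemma phi_ff (m : ℕ) : phi (ff m) = gg m := by
  unfold ff gg
  rw [Finset.sum_Ico_eq_sum_range]
  simp [phi_x, phi_y, add_comm]

lemma aa_zero : aa 0 = 1 := by simp [aa, AA_zero]

lemma aa_conv (n : ℕ) (hn : n ≠ 0) : aa n = ∑ m ∈ range (n+1), (n.choose m : Polynomial ℚ) * (gg m * aa (n - m)) := by
  have := congrArg phi (AA_conv n)
  simpa [phi_z, hn, phi_ff, aa] using this

lemma aa_coeff (k l : ℕ) : (aa (k+l)).coeff k =
    Nat.card {σ : Equiv.Perm (Fin (k + l)) //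
        (Finset.univ.filter fun i => i < σ i).card = k ∧
        (Finset.univ.filter fun i => σ i < i).card = l ∧
        ∀ i, σ i ≠ i} := by
  classical
  rw [Nat.card_eq_fintype_card, Fintype.card_subtype, Finset.card_filter]
  simp only [aa, AA, map_sum, Polynomial.finsetSum_coeff]
  push_cast
  apply sum_congr rfl
  intro σ _
  rw [map_prod]
  by_cases hσ : ∀ i, σ i ≠ i
  · have h1 : ∀ i, phi (wt i (σ i)) = if i < σ i then Polynomial.X else 1 := by
      intro i
      unfold wt
      rcases lt_trichotomy i (σ i) with h | h | h
      · simp [h, phi_x]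
      · exact absurd h.symm (hσ i)
      · simp [h, h.not_gt, phi_y]
    simp only [h1]
    rw [← Finset.prod_filter, prod_const, Polynomial.coeff_X_pow]
    have h2 : (Finset.univ.filter fun i => i < σ i).card + (Finset.univ.filter fun i => σ i < i).card = k + l := by
      have := Finset.card_filter_add_card_filter_not (s := (univ : Finset (Fin (k+l)))) (fun i => i < σ i)
      rw [card_univ, Fintype.card_fin] at this
      refine Eq.trans ?_ this
      congr 2
      ext i
      simp only [mem_filter, mem_univ, true_and, not_lt]
      exact ⟨le_of_lt, fun h => lt_of_le_of_ne h (hσ i)⟩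
    apply if_congr _ rfl rfl
    constructor
    · intro h; exact ⟨h.symm, by omega, hσ⟩
    · intro h; exact h.1.symm
  · rw [if_neg (fun h => hσ h.2.2)]
    push Not at hσ
    obtain ⟨i, hi⟩ := hσ
    rw [prod_eq_zero (mem_univ i)]
    · simp
    · simp [hi, wt, phi_z]

section comb
variable {α : Type} [DecidableEq α]

def IsVal (U : Finset α) (P : Finset (Finset α × ℕ)) : Prop :=
  (∀ p ∈ P, 1 ≤ p.2 ∧ p.2 < p.1.card) ∧
    (P : Set (Finset α × ℕ)).Pairwise (fun p q => Disjoint p.1 q.1) ∧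
    P.sup Prod.fst = U

open Classical in
def valid (U : Finset α) : Finset (Finset (Finset α × ℕ)) :=
  (U.powerset ×ˢ range (U.card+1)).powerset.filter (IsVal U)

lemma mem_valid {U : Finset α} {P : Finset (Finset α × ℕ)} : P ∈ valid U ↔ IsVal U P := by
  classical
  unfold valid
  rw [mem_filter, and_iff_right_iff_imp]
  rintro ⟨h1, h2, h3⟩
  rw [mem_powerset]
  intro p hp
  have hs : p.1 ⊆ U := by rw [← h3]; exact Finset.le_sup (f := Prod.fst) hp
  have := card_le_card hs
  have := h1 p hp
  rw [mem_product, mem_powerset, mem_range]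
  exact ⟨hs, by omega⟩

def QQ (U : Finset α) : Polynomial ℚ :=
  ∑ P ∈ valid U, (P.card.factorial : Polynomial ℚ) * Polynomial.X ^ (∑ p ∈ P, p.2)

lemma valid_erase {U : Finset α} {P : Finset (Finset α × ℕ)} (h : IsVal U P) {p} (hp : p ∈ P) :
    IsVal (U \ p.1) (P.erase p) := by
  obtain ⟨h1, h2, h3⟩ := h
  refine ⟨fun q hq => h1 q (mem_of_mem_erase hq), h2.mono (by simp), ?_⟩
  rw [← h3]
  ext a
  simp only [Finset.mem_sup, mem_sdiff, mem_erase]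
  constructor
  · rintro ⟨q, ⟨hqp, hq⟩, ha⟩
    exact ⟨⟨q, hq, ha⟩, fun hap => Finset.disjoint_left.1 (h2 hq hp hqp) ha hap⟩
  · rintro ⟨⟨q, hq, ha⟩, hap⟩
    exact ⟨q, ⟨by rintro rfl; exact hap ha, hq⟩, ha⟩

lemma valid_sub {U : Finset α} {P : Finset (Finset α × ℕ)} (h : IsVal U P) {p} (hp : p ∈ P) :
    p.1 ⊆ U := by rw [← h.2.2]; exact Finset.le_sup (f := Prod.fst) hp

lemma valid_not_mem {U S : Finset α} {j : ℕ} {P : Finset (Finset α × ℕ)} (h : IsVal (U \ S) P)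
    : (S, j) ∉ P := by
  intro hp
  have h1 := h.1 _ hp
  have h2 := valid_sub h hp
  simp only at h1 h2
  have : S = ∅ := by
    rw [Finset.eq_empty_iff_forall_notMem]
    intro a ha
    have := h2 ha
    simp [ha] at this
  simp [this] at h1

lemma valid_insert {U S : Finset α} {j : ℕ} {P : Finset (Finset α × ℕ)} (hS : S ⊆ U) (hj : 1 ≤ j)
    (hj' : j < S.card) (h : IsVal (U \ S) P) : IsVal U (insert (S, j) P) := by
  have hd : ∀ q ∈ P, Disjoint S q.1 := fun q hq =>
    Finset.disjoint_of_subset_right (valid_sub h hq) Finset.disjoint_sdiff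
  refine ⟨?_, ?_, ?_⟩
  · intro p hp
    rcases mem_insert.1 hp with rfl | hp
    · exact ⟨hj, hj'⟩
    · exact h.1 p hp
  · rw [coe_insert]
    apply h.2.1.insert
    intro q hq _
    exact ⟨hd q hq, (hd q hq).symm⟩
  · rw [sup_insert, h.2.2]
    simp [hS]

lemma QQ_rec (U : Finset α) (hU : U ≠ ∅) :
    QQ U = ∑ S ∈ U.powerset, gg S.card * QQ (U \ S) := by
  have h1 : QQ U = ∑ P ∈ valid U, ∑ p ∈ P, ((P.erase p).card.factorial : Polynomial ℚ) *
      (Polynomial.X ^ p.2 * Polynomial.X ^ (∑ q ∈ P.erase p, q.2)) := by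
    unfold QQ
    apply sum_congr rfl
    intro P hP
    rw [mem_valid] at hP
    have hne : P.card ≠ 0 := by
      rw [Ne, card_eq_zero]
      rintro rfl
      exact hU (by simpa using hP.2.2.symm)
    have : ∀ p ∈ P, ((P.erase p).card.factorial : Polynomial ℚ) *
      (Polynomial.X ^ p.2 * Polynomial.X ^ (∑ q ∈ P.erase p, q.2)) =
        ((P.card - 1).factorial : Polynomial ℚ) * Polynomial.X ^ (∑ q ∈ P, q.2) := by
      intro p hp
      rw [← pow_add, add_sum_erase P _ hp, card_erase_of_mem hp]
    rw [sum_congr rfl this, sum_const, nsmul_eq_mul, ← mul_assoc, ← Nat.cast_mul,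
      Nat.mul_factorial_pred hne]
  have h2 : ∀ S, gg S.card * QQ (U \ S) = ∑ j ∈ Ico 1 S.card, ∑ P ∈ valid (U \ S),
      (P.card.factorial : Polynomial ℚ) * (Polynomial.X ^ j * Polynomial.X ^ (∑ p ∈ P, p.2)) := by
    intro S
    unfold gg QQ
    rw [sum_mul_sum]
    apply sum_congr rfl; intro j _
    apply sum_congr rfl; intro P _
    ring
  rw [h1, sum_congr rfl (fun S _ => h2 S)]
  simp only [Finset.sum_sigma']
  refine Finset.sum_bij' (fun x _ => ⟨x.2.1, x.2.2, x.1.erase x.2⟩)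
    (fun y _ => ⟨insert (y.1, y.2.1) y.2.2, (y.1, y.2.1)⟩) ?_ ?_ ?_ ?_ ?_
  · rintro ⟨P, p⟩ h
    simp only [mem_sigma, mem_valid, mem_powerset, mem_Ico] at h ⊢
    exact ⟨valid_sub h.1 h.2, h.1.1 p h.2, valid_erase h.1 h.2⟩
  · rintro ⟨S, j, P⟩ h
    simp only [mem_sigma, mem_valid, mem_powerset, mem_Ico] at h ⊢
    exact ⟨valid_insert h.1 h.2.1.1 h.2.1.2 h.2.2, mem_insert_self _ _⟩
  · rintro ⟨P, p⟩ h
    simp only [mem_sigma] at h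
    simp [insert_erase h.2]
  · rintro ⟨S, j, P⟩ h
    simp only [mem_sigma, mem_valid] at h
    simp [erase_insert (valid_not_mem h.2.2)]
  · rintro ⟨P, p⟩ h
    rfl

lemma QQ_empty : QQ (∅ : Finset α) = 1 := by
  have : valid (∅ : Finset α) = {∅} := by
    ext P
    rw [mem_valid, mem_singleton]
    constructor
    · intro h
      rw [Finset.eq_empty_iff_forall_notMem]
      intro p hp
      have h1 := h.1 p hp
      have h2 := Finset.subset_empty.1 (valid_sub h hp)
      simp [h2] at h1
    · rintro rfl
      simp [IsVal]
  simp [QQ, this]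

lemma gg_zero : gg 0 = 0 := by simp [gg]

lemma QQ_eq (U : Finset α) : QQ U = aa U.card := by
  induction U using Finset.strongInduction with
  | _ U ih =>
    by_cases hU : U = ∅
    · subst hU; simp [QQ_empty, aa_zero]
    · rw [QQ_rec U hU, aa_conv _ (by simpa using hU)]
      have := Finset.sum_powerset_apply_card (fun m => gg m * aa (U.card - m)) (x := U)
      simp only [nsmul_eq_mul] at this
      rw [← this]
      apply sum_congr rfl
      intro S hS
      rw [mem_powerset] at hS
      by_cases h0 : S = ∅
      · simp [h0, gg_zero]
      · rw [ih (U \ S) (Finset.sdiff_ssubset hS (Finset.nonempty_iff_ne_empty.2 h0)),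
          card_sdiff_of_subset hS]

lemma valid_card_le {U : Finset α} {P : Finset (Finset α × ℕ)} (h : IsVal U P) : P.card ≤ U.card := by
  have h1 : U = P.biUnion Prod.fst := by rw [← h.2.2, sup_eq_biUnion]
  rw [h1, card_biUnion (fun p hp q hq hpq => h.2.1 hp hq hpq), card_eq_sum_ones]
  apply sum_le_sum
  intro p hp
  have := h.1 p hp
  omega
end comb

lemma Nfund_eq (k l r : ℕ) : Nfund k l r =
    ((valid (univ : Finset (Fin (k+l)))).filter (fun P => P.card = r ∧ ∑ p ∈ P, p.2 = k)).card := by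
  unfold Nfund
  rw [← Nat.card_eq_finsetCard]
  apply Nat.card_congr
  apply Equiv.subtypeEquivRight
  intro P
  rw [mem_filter, mem_valid]
  unfold IsVal
  tauto

lemma Nshift_eq (k l : ℕ) (hk : 1 ≤ k) : (Nshift k l 0 : ℚ) = (QQ (univ : Finset (Fin (k+l)))).coeff k := by
  unfold Nshift QQ
  rw [Polynomial.finsetSum_coeff]
  have h1 : ∀ P : Finset (Finset (Fin (k+l)) × ℕ), ((P.card.factorial : Polynomial ℚ) * 
      Polynomial.X ^ (∑ p ∈ P, p.2)).coeff k = if ∑ p ∈ P, p.2 = k then (P.card.factorial : ℚ) else 0 := by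
    intro P
    rw [← Polynomial.C_eq_natCast, Polynomial.coeff_C_mul, Polynomial.coeff_X_pow]
    simp [eq_comm]
  rw [sum_congr rfl (fun P _ => h1 P), ← sum_filter,
    ← Finset.sum_fiberwise_of_maps_to (t := Icc 1 (k+l)) (g := Finset.card)]
  · push_cast
    apply sum_congr rfl
    intro r _
    rw [filter_filter, Nfund_eq]
    simp only [add_zero, Nat.cast_nonneg, if_true, Int.toNat_natCast]
    rw [sum_congr rfl (g := fun _ => (r.factorial : ℚ)), sum_const, nsmul_eq_mul, mul_comm]
    · simp only [and_comm]
    · intro P hP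
      rw [(mem_filter.1 hP).2.2]
  · intro P hP
    rw [mem_filter, mem_valid] at hP
    have := valid_card_le hP.1
    rw [card_univ, Fintype.card_fin] at this
    rw [mem_Icc]
    refine ⟨?_, this⟩
    rw [Nat.one_le_iff_ne_zero, Ne, card_eq_zero]
    rintro rfl
    have := hP.2
    simp at this
    omega

end
end aux

/-- The number of derangements of `{1,…,k+l}` with exactly `k` values over the diagonal
and `l` values under the diagonal equals the shifted multinomial `N^{(0)}_{k,l}`. -/
theorem derangements_eq_shifted_multinomial (k l : ℕ) (hk : 1 ≤ k) (hl : 1 ≤ l) :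
    Nat.card {σ : Equiv.Perm (Fin (k + l)) //
        (Finset.univ.filter fun i => i < σ i).card = k ∧
        (Finset.univ.filter fun i => σ i < i).card = l ∧
        ∀ i, σ i ≠ i} = Nshift k l 0 := by
  have h1 := aa_coeff k l
  have h2 := Nshift_eq k l hk
  rw [QQ_eq, Finset.card_univ, Fintype.card_fin, h1] at h2
  exact_mod_cast h2.symm
end

section
/- The number of permutations of {1,...,n} whose family-registry decomposition has n_1 singlets and n_{(i,j)} families with i ascents and j descents (for each (i,j) with i,j ≥ 1) equals n!/(n_1!·Π (i+j)!^{n_{(i,j)}}) · (Σ n_{(i,j)})!/Π n_{(i,j)}!, and these numbers summed over all configurations with n_1 + Σ (i+j)·n_{(i,j)} = n equal n!. -/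
/-- A (stripped) registry on `{1,…,n}`: an ordered list of mutually disjoint families,
each a subset `F ⊆ {1,…,n}` with `|F| ≥ 2` together with its number of reds
`a ∈ {1,…,|F|-1}`. -/
def IsRegistry {n : ℕ} (L : List (Finset (Fin n) × ℕ)) : Prop :=
  L.Pairwise (fun p q => Disjoint p.1 q.1) ∧
  ∀ p ∈ L, 2 ≤ p.1.card ∧ 1 ≤ p.2 ∧ p.2 < p.1.card

/-- The multinomial weight of a configuration `c` (where `c (i,j)` is the number of
families with `i` ascents and `j` descents, and the number of singlets is
`n₁ = n - Σ (i+j)·c(i,j)`):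
`n!/(n₁!·Π (i+j)!^{c(i,j)}) · (Σ c(i,j))!/Π c(i,j)!`. -/
def configWeight (n : ℕ) (c : Fin (n + 1) × Fin (n + 1) → ℕ) : ℕ :=
  (n.factorial /
      ((n - ∑ p : Fin (n + 1) × Fin (n + 1), ((p.1 : ℕ) + (p.2 : ℕ)) * c p).factorial *
        ∏ p : Fin (n + 1) × Fin (n + 1), ((p.1 : ℕ) + (p.2 : ℕ)).factorial ^ c p)) *
    ((∑ p : Fin (n + 1) × Fin (n + 1), c p).factorial /
      ∏ p : Fin (n + 1) × Fin (n + 1), (c p).factorial)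

/-- total size of a configuration -/
def fsTot {n : ℕ} (c : Fin (n + 1) × Fin (n + 1) → ℕ) : ℕ :=
  ∑ p : Fin (n + 1) × Fin (n + 1), ((p.1 : ℕ) + (p.2 : ℕ)) * c p

/-- rational weight -/
def fsW {n : ℕ} (m : ℕ) (c : Fin (n + 1) × Fin (n + 1) → ℕ) : ℚ :=
  ((m.factorial : ℚ) / (((m - fsTot c).factorial : ℚ) *
    ∏ p : Fin (n + 1) × Fin (n + 1), (((p.1 : ℕ) + (p.2 : ℕ)).factorial : ℚ) ^ c p)) *
    (((∑ p, c p).factorial : ℚ) / ∏ p, ((c p).factorial : ℚ))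

lemma fsW_eq {n : ℕ} (c : Fin (n + 1) × Fin (n + 1) → ℕ) (h : fsTot c ≤ n) :
    ((configWeight n c : ℕ) : ℚ) = fsW n c := by
  unfold configWeight fsW
  have h2 : (∏ p, (c p).factorial) ∣ (∑ p, c p).factorial :=
    Nat.prod_factorial_dvd_factorial_sum _ _
  have h3 : (∏ p : Fin (n + 1) × Fin (n + 1), ((p.1 : ℕ) + (p.2 : ℕ)).factorial ^ c p) ∣
      (fsTot c).factorial := by
    refine dvd_trans (Finset.prod_dvd_prod_of_dvd _ _ ?_)
      (Nat.prod_factorial_dvd_factorial_sum _ _)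
    intro p _
    have := Nat.prod_factorial_dvd_factorial_sum (Finset.range (c p))
      (fun _ => (p.1 : ℕ) + (p.2 : ℕ))
    simpa [mul_comm] using this
  have h1 : ((n - fsTot c).factorial *
      ∏ p : Fin (n + 1) × Fin (n + 1), ((p.1 : ℕ) + (p.2 : ℕ)).factorial ^ c p) ∣
      n.factorial := by
    refine dvd_trans (mul_dvd_mul_left _ h3) ?_
    rw [mul_comm]
    exact Nat.factorial_mul_factorial_dvd_factorial h
  unfold fsTot at h1
  rw [Nat.cast_mul, Nat.cast_div h1, Nat.cast_div h2]
  · push_cast [fsTot]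
    rfl
  · exact_mod_cast (Finset.prod_pos (fun p _ => Nat.factorial_pos _)).ne'
  · have : 0 < ((n - fsTot c).factorial *
      ∏ p : Fin (n + 1) × Fin (n + 1), ((p.1 : ℕ) + (p.2 : ℕ)).factorial ^ c p) :=
      Nat.mul_pos (Nat.factorial_pos _)
        (Finset.prod_pos (fun p _ => pow_pos (Nat.factorial_pos _) _))
    unfold fsTot at this
    exact_mod_cast this.ne'

lemma fsTot_add {n : ℕ} (c : Fin (n + 1) × Fin (n + 1) → ℕ) (p) :
    fsTot (c + Pi.single p 1) = fsTot c + ((p.1 : ℕ) + (p.2 : ℕ)) := by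
  unfold fsTot
  simp only [Pi.add_apply, mul_add, Finset.sum_add_distrib]
  congr 1
  rw [Finset.sum_eq_single p] <;> simp +contextual [Pi.single_apply]

lemma fsSum_add {n : ℕ} (c : Fin (n + 1) × Fin (n + 1) → ℕ) (p) :
    ∑ q, (c + Pi.single p 1 : Fin (n + 1) × Fin (n + 1) → ℕ) q = (∑ q, c q) + 1 := by
  simp only [Pi.add_apply, Finset.sum_add_distrib]
  congr 1
  rw [Finset.sum_eq_single p] <;> simp +contextual [Pi.single_apply]

lemma fsSub_add {n : ℕ} (c : Fin (n + 1) × Fin (n + 1) → ℕ) (p) (h : 0 < c p) :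
    c - Pi.single p 1 + Pi.single p 1 = c := by
  funext q
  by_cases hq : q = p
  · subst hq; simp; omega
  · simp [Pi.single_apply, hq]

lemma fsW_term {n : ℕ} (m : ℕ) (c : Fin (n + 1) × Fin (n + 1) → ℕ) (p)
    (h : fsTot (c + Pi.single p 1) ≤ m) :
    (m.choose ((p.1 : ℕ) + (p.2 : ℕ)) : ℚ) * fsW (m - ((p.1 : ℕ) + (p.2 : ℕ))) c *
      (∑ q, (c + Pi.single p 1 : Fin (n + 1) × Fin (n + 1) → ℕ) q : ℕ) =
    fsW m (c + Pi.single p 1) * ((c + Pi.single p 1 : Fin (n + 1) × Fin (n + 1) → ℕ) p : ℕ) := by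
  unfold fsW
  rw [fsSum_add]
  have e1 : m - ((p.1 : ℕ) + (p.2 : ℕ)) - fsTot c = m - fsTot (c + Pi.single p 1) := by
    rw [fsTot_add]; omega
  have hs : (p.1 : ℕ) + (p.2 : ℕ) ≤ m := by rw [fsTot_add] at h; omega
  rw [e1, Nat.cast_choose ℚ hs, Nat.factorial_succ]
  have e2 : ∏ q : Fin (n + 1) × Fin (n + 1),
      (((q.1 : ℕ) + (q.2 : ℕ)).factorial : ℚ) ^ (c + Pi.single p 1 : Fin (n + 1) × Fin (n + 1) → ℕ) q =
      (∏ q : Fin (n + 1) × Fin (n + 1), (((q.1 : ℕ) + (q.2 : ℕ)).factorial : ℚ) ^ c q) *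
        (((p.1 : ℕ) + (p.2 : ℕ)).factorial : ℚ) := by
    simp only [Pi.add_apply, pow_add, Finset.prod_mul_distrib]
    congr 1
    rw [Finset.prod_eq_single p] <;> simp +contextual [Pi.single_apply]
  have e3 : ∏ q, (((c + Pi.single p 1 : Fin (n + 1) × Fin (n + 1) → ℕ) q).factorial : ℚ) =
      (∏ q, ((c q).factorial : ℚ)) * ((c + Pi.single p 1 : Fin (n + 1) × Fin (n + 1) → ℕ) p : ℕ) := by
    have : ∀ q, (((c + Pi.single p 1 : Fin (n + 1) × Fin (n + 1) → ℕ) q).factorial : ℚ) =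
      ((c q).factorial : ℚ) * (if q = p then (((c + Pi.single p 1 : Fin (n + 1) × Fin (n + 1) → ℕ) p : ℕ) : ℚ) else 1) := by
      intro q
      by_cases hq : q = p
      · subst hq; simp [Nat.factorial_succ, mul_comm]
      · simp [hq, Pi.single_apply]
    simp only [this, Finset.prod_mul_distrib]
    congr 1
    simp
  rw [e2, e3]
  have n1 : ((c + Pi.single p 1 : Fin (n + 1) × Fin (n + 1) → ℕ) p : ℚ) ≠ 0 := by
    simp; positivity
  have n2 : (∏ q, ((c q).factorial : ℚ)) ≠ 0 :=
    Finset.prod_ne_zero_iff.2 fun q _ => by positivity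
  have n3 : (∏ q : Fin (n + 1) × Fin (n + 1),
      (((q.1 : ℕ) + (q.2 : ℕ)).factorial : ℚ) ^ c q) ≠ 0 :=
    Finset.prod_ne_zero_iff.2 fun q _ => by positivity
  generalize (∏ q, ((c q).factorial : ℚ)) = A at *
  generalize (∏ q : Fin (n + 1) × Fin (n + 1),
      (((q.1 : ℕ) + (q.2 : ℕ)).factorial : ℚ) ^ c q) = B at *
  generalize (((c + Pi.single p 1 : Fin (n + 1) × Fin (n + 1) → ℕ) p : ℕ) : ℚ) = C at *
  push_cast
  field_simp

lemma fsW_rec {n : ℕ} (m : ℕ) (c : Fin (n + 1) × Fin (n + 1) → ℕ)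
    (h : fsTot c ≤ m) (h0 : ∑ q, c q ≠ 0) :
    fsW m c = ∑ p ∈ Finset.univ.filter (fun p => 0 < c p),
      (m.choose ((p.1 : ℕ) + (p.2 : ℕ)) : ℚ) *
        fsW (m - ((p.1 : ℕ) + (p.2 : ℕ))) (c - Pi.single p 1) := by
  have hN : ((∑ q, c q : ℕ) : ℚ) ≠ 0 := by exact_mod_cast h0
  apply mul_right_cancel₀ hN
  rw [Finset.sum_mul]
  have : ∀ p ∈ Finset.univ.filter (fun p => 0 < c p),
      (m.choose ((p.1 : ℕ) + (p.2 : ℕ)) : ℚ) *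
        fsW (m - ((p.1 : ℕ) + (p.2 : ℕ))) (c - Pi.single p 1) * ((∑ q, c q : ℕ) : ℚ) =
      fsW m c * (c p : ℕ) := by
    intro p hp
    have hp' : 0 < c p := by simpa using hp
    have := fsW_term m (c - Pi.single p 1) p (by rw [fsSub_add c p hp']; exact h)
    rw [fsSub_add c p hp'] at this
    exact this
  rw [Finset.sum_congr rfl this, ← Finset.mul_sum, Finset.sum_filter]
  congr 1
  push_cast
  refine Finset.sum_congr rfl fun p _ => ?_
  split_ifs with h
  · rfl
  · have : c p = 0 := by omega
    simp [this]

/-- support condition -/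
def fsSupp {n : ℕ} (c : Fin (n + 1) × Fin (n + 1) → ℕ) : Prop :=
  ∀ p, c p ≠ 0 → 1 ≤ (p.1 : ℕ) ∧ 1 ≤ (p.2 : ℕ)

lemma fsSupp_sub {n : ℕ} {c : Fin (n + 1) × Fin (n + 1) → ℕ} (h : fsSupp c) (p) :
    fsSupp (c - Pi.single p 1) := by
  intro q hq
  apply h q
  intro h0
  apply hq
  simp [h0]

lemma fsTot_sub {n : ℕ} (c : Fin (n + 1) × Fin (n + 1) → ℕ) (p) (h : 0 < c p) :
    fsTot (c - Pi.single p 1) + ((p.1 : ℕ) + (p.2 : ℕ)) = fsTot c := by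
  rw [← fsTot_add, fsSub_add c p h]

lemma fsW_zero {n : ℕ} (m : ℕ) : fsW m (0 : Fin (n + 1) × Fin (n + 1) → ℕ) = 1 := by
  have : (m.factorial : ℚ) ≠ 0 := by positivity
  simp [fsW, fsTot, this]

/-- The lists counted. -/
def fsGood {n : ℕ} (S : Finset (Fin n)) (c : Fin (n + 1) × Fin (n + 1) → ℕ)
    (L : List (Finset (Fin n) × ℕ)) : Prop :=
  IsRegistry L ∧ (∀ x ∈ L, x.1 ⊆ S) ∧
    ∀ i j : Fin (n + 1),
      (L.filter (fun p => p.2 = (i : ℕ) ∧ p.1.card = (i : ℕ) + (j : ℕ))).length = c (i, j)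

lemma fsRegistry_cons {n : ℕ} (x : Finset (Fin n) × ℕ) (L : List (Finset (Fin n) × ℕ)) :
    IsRegistry (x :: L) ↔ (∀ y ∈ L, Disjoint x.1 y.1) ∧
      (2 ≤ x.1.card ∧ 1 ≤ x.2 ∧ x.2 < x.1.card) ∧ IsRegistry L := by
  unfold IsRegistry
  simp only [List.pairwise_cons, List.mem_cons, forall_eq_or_imp]
  tauto

lemma fsLen_cons {n : ℕ} (F : Finset (Fin n)) (q : Fin (n + 1) × Fin (n + 1))
    (hF : F.card = (q.1 : ℕ) + (q.2 : ℕ)) (L : List (Finset (Fin n) × ℕ)) (i j : Fin (n + 1)) :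
    (((F, (q.1 : ℕ)) :: L).filter
      (fun p => p.2 = (i : ℕ) ∧ p.1.card = (i : ℕ) + (j : ℕ))).length =
    (L.filter (fun p => p.2 = (i : ℕ) ∧ p.1.card = (i : ℕ) + (j : ℕ))).length +
      (Pi.single q 1 : Fin (n + 1) × Fin (n + 1) → ℕ) (i, j) := by
  rw [List.filter_cons]
  by_cases h : (i, j) = q
  · subst h
    simp [hF]
  · have : ¬ ((q.1 : ℕ) = i ∧ F.card = (i : ℕ) + (j : ℕ)) := by
      rintro ⟨h1, h2⟩
      apply h
      ext
      · simp [h1]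
      · simp; omega
    simp [this, Pi.single_apply, h]

lemma fsGood_cons {n : ℕ} (S F : Finset (Fin n)) (q : Fin (n + 1) × Fin (n + 1))
    (hF : F.card = (q.1 : ℕ) + (q.2 : ℕ)) (c : Fin (n + 1) × Fin (n + 1) → ℕ)
    (hc : fsSupp c) (L : List (Finset (Fin n) × ℕ)) :
    fsGood S c ((F, (q.1 : ℕ)) :: L) ↔
      0 < c q ∧ F ⊆ S ∧ fsGood (S \ F) (c - Pi.single q 1) L := by
  unfold fsGood
  rw [fsRegistry_cons]
  simp only [fsLen_cons F q hF, List.mem_cons, forall_eq_or_imp]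
  constructor
  · rintro ⟨⟨hd, hx, hr⟩, ⟨hFS, hL⟩, hcount⟩
    refine ⟨?_, hFS, hr, ?_, ?_⟩
    · have := hcount q.1 q.2
      simp at this
      omega
    · intro x hx
      rw [Finset.subset_sdiff]
      exact ⟨hL x hx, (hd x hx).symm⟩
    · intro i j
      have := hcount i j
      simp only [Pi.sub_apply]
      omega
  · rintro ⟨hq, hFS, hr, hL, hcount⟩
    have hq' := hc q (by omega)
    refine ⟨⟨?_, ?_, hr⟩, ⟨hFS, ?_⟩, ?_⟩
    · intro y hy
      exact (Finset.subset_sdiff.1 (hL y hy)).2.symm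
    · simp only [hF]; omega
    · intro x hx
      exact (Finset.subset_sdiff.1 (hL x hx)).1
    · intro i j
      rw [hcount i j]
      exact congrFun (fsSub_add c q hq) (i, j)

lemma fsCount {n : ℕ} (N : ℕ) : ∀ (S : Finset (Fin n)) (c : Fin (n + 1) × Fin (n + 1) → ℕ),
    ∑ p, c p = N → fsSupp c → fsTot c ≤ S.card →
    ∃ T : Finset (List (Finset (Fin n) × ℕ)), (∀ L, L ∈ T ↔ fsGood S c L) ∧
      (T.card : ℚ) = fsW S.card c := by
  classical
  induction N with
  | zero =>
    intro S c hN hc hS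
    have h0 : c = 0 := by
      funext p
      exact Finset.sum_eq_zero_iff.1 hN p (Finset.mem_univ _)
    subst h0
    refine ⟨{[]}, ?_, by simp [fsW_zero]⟩
    intro L
    rw [Finset.mem_singleton]
    constructor
    · rintro rfl
      simp [fsGood, IsRegistry]
    · intro h
      rcases L with _ | ⟨x, L⟩
      · rfl
      · exfalso
        obtain ⟨⟨-, hr⟩, -, hcount⟩ := h
        obtain ⟨h1, h2, h3⟩ := hr x (by simp)
        have hle : x.1.card ≤ n := by simpa using Finset.card_le_univ x.1
        have := hcount ⟨x.2, by omega⟩ ⟨x.1.card - x.2, by omega⟩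
        have h4 : x.1.card = x.2 + (x.1.card - x.2) := by omega
        simp [List.filter_cons, ← h4] at this
  | succ N ih =>
    intro S c hN hc hS
    have key : ∀ (q : Fin (n + 1) × Fin (n + 1)) (F : Finset (Fin n)),
        ∃ T : Finset (List (Finset (Fin n) × ℕ)), 0 < c q →
          F ∈ S.powersetCard ((q.1 : ℕ) + (q.2 : ℕ)) →
          (∀ L, L ∈ T ↔ fsGood (S \ F) (c - Pi.single q 1) L) ∧
          (T.card : ℚ) = fsW (S.card - ((q.1 : ℕ) + (q.2 : ℕ))) (c - Pi.single q 1) := by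
      intro q F
      by_cases hq : 0 < c q ∧ F ∈ S.powersetCard ((q.1 : ℕ) + (q.2 : ℕ))
      · obtain ⟨hq, hF⟩ := hq
        rw [Finset.mem_powersetCard] at hF
        have hcard : (S \ F).card = S.card - ((q.1 : ℕ) + (q.2 : ℕ)) := by
          rw [Finset.card_sdiff_of_subset hF.1, hF.2]
        have ht := fsTot_sub c q hq
        have hs := fsSum_add (c - Pi.single q 1) q
        rw [fsSub_add c q hq] at hs
        obtain ⟨T, h1, h2⟩ := ih (S \ F) (c - Pi.single q 1) (by omega) (fsSupp_sub hc q)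
          (by rw [hcard]; omega)
        exact ⟨T, fun _ _ => ⟨h1, by rw [h2, hcard]⟩⟩
      · exact ⟨∅, fun h1 h2 => absurd ⟨h1, h2⟩ hq⟩
    choose T hT using key
    let I := (Finset.univ.filter (fun p => 0 < c p)).sigma
      (fun q => S.powersetCard ((q.1 : ℕ) + (q.2 : ℕ)))
    have hI : ∀ x, x ∈ I ↔ 0 < c x.1 ∧ x.2 ∈ S.powersetCard ((x.1.1 : ℕ) + (x.1.2 : ℕ)) := by
      intro x; simp [I]
    refine ⟨I.biUnion (fun x => (T x.1 x.2).image (fun L => (x.2, (x.1.1 : ℕ)) :: L)), ?_, ?_⟩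
    · intro L
      rw [Finset.mem_biUnion]
      constructor
      · rintro ⟨⟨q, F⟩, hx, hL⟩
        rw [hI] at hx
        obtain ⟨hq, hF⟩ := hx
        simp only at hq hF hL
        obtain ⟨L', hL', rfl⟩ := Finset.mem_image.1 hL
        rw [(hT q F hq hF).1] at hL'
        rw [Finset.mem_powersetCard] at hF
        exact (fsGood_cons S F q hF.2 c hc L').2 ⟨hq, hF.1, hL'⟩
      · intro h
        rcases L with _ | ⟨⟨F, a⟩, L⟩
        · exfalso
          have h0 : ∑ p, c p = 0 := Finset.sum_eq_zero fun p _ => by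
            simpa using (h.2.2 p.1 p.2).symm
          omega
        · obtain ⟨h1, h2, h3⟩ := h.1.2 (F, a) (by simp)
          simp only at h1 h2 h3
          have hle : F.card ≤ n := by simpa using Finset.card_le_univ F
          obtain ⟨q, hqa, hqF⟩ : ∃ q : Fin (n + 1) × Fin (n + 1), a = (q.1 : ℕ) ∧
              F.card = (q.1 : ℕ) + (q.2 : ℕ) :=
            ⟨(⟨a, by omega⟩, ⟨F.card - a, by omega⟩), rfl, by simp; omega⟩
          subst hqa
          obtain ⟨g1, g2, g3⟩ := (fsGood_cons S F q hqF c hc L).1 h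
          have hF : F ∈ S.powersetCard ((q.1 : ℕ) + (q.2 : ℕ)) :=
            Finset.mem_powersetCard.2 ⟨g2, hqF⟩
          exact ⟨⟨q, F⟩, (hI _).2 ⟨g1, hF⟩,
            Finset.mem_image.2 ⟨L, ((hT q F g1 hF).1 L).2 g3, rfl⟩⟩
    · rw [Finset.card_biUnion]
      · rw [fsW_rec S.card c hS (by omega)]
        push_cast
        rw [Finset.sum_sigma]
        refine Finset.sum_congr rfl fun q hq => ?_
        have hq' : 0 < c q := by simpa using hq
        rw [Finset.sum_congr rfl (g := fun _ =>
          fsW (S.card - ((q.1 : ℕ) + (q.2 : ℕ))) (c - Pi.single q 1))]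
        · simp
        · intro F hF
          rw [Finset.card_image_of_injective _ (List.cons_injective)]
          exact (hT q F hq' hF).2
      · rintro ⟨q, F⟩ hx ⟨q', F'⟩ hx' hne
        have hx := (hI _).1 hx
        have hx' := (hI _).1 hx'
        simp only [Finset.mem_powersetCard] at hx hx'
        simp only [Function.onFun]
        rw [Finset.disjoint_left]
        intro L hL hL'
        obtain ⟨L1, -, rfl⟩ := Finset.mem_image.1 hL
        obtain ⟨L2, -, h2⟩ := Finset.mem_image.1 hL'
        simp only [List.cons.injEq, Prod.mk.injEq] at h2
        apply hne
        obtain ⟨⟨rfl, h3⟩, -⟩ := h2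
        have : q = q' := by
          ext
          · exact h3.symm
          · omega
        subst this
        rfl

/-- configurations of total size at most `m` -/
def fsCC (n m : ℕ) : Finset (Fin (n + 1) × Fin (n + 1) → ℕ) :=
  (Fintype.piFinset fun _ => Finset.range (n + 1)).filter
    (fun c => (∀ p, c p ≠ 0 → 1 ≤ (p.1 : ℕ) ∧ 1 ≤ (p.2 : ℕ)) ∧ fsTot c ≤ m)

lemma fsBound {n : ℕ} {c : Fin (n + 1) × Fin (n + 1) → ℕ} (hc : fsSupp c) (p) :
    c p ≤ fsTot c := by
  have h : ((p.1 : ℕ) + (p.2 : ℕ)) * c p ≤ fsTot c :=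
    Finset.single_le_sum (f := fun p : Fin (n + 1) × Fin (n + 1) =>
      ((p.1 : ℕ) + (p.2 : ℕ)) * c p) (fun _ _ => Nat.zero_le _) (Finset.mem_univ p)
  by_cases h0 : c p = 0
  · omega
  · have := hc p h0
    nlinarith

lemma fsMem {n m : ℕ} (hm : m ≤ n) (c : Fin (n + 1) × Fin (n + 1) → ℕ) :
    c ∈ fsCC n m ↔ fsSupp c ∧ fsTot c ≤ m := by
  unfold fsCC
  rw [Finset.mem_filter]
  constructor
  · exact fun h => h.2
  · intro h
    refine ⟨?_, h⟩
    rw [Fintype.mem_piFinset]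
    intro p
    have := fsBound h.1 p
    rw [Finset.mem_range]
    omega

lemma fsTel (m : ℕ) : ∑ k ∈ Finset.range (m + 1),
    ((k - 1 : ℕ) : ℚ) * (1 / (k.factorial : ℚ)) = 1 - 1 / (m.factorial : ℚ) := by
  induction m with
  | zero => simp
  | succ m ih =>
    rw [Finset.sum_range_succ, ih, Nat.factorial_succ]
    push_cast
    field_simp
    ring

/-- available family types -/
def fsP (n m : ℕ) : Finset (Fin (n + 1) × Fin (n + 1)) :=
  Finset.univ.filter (fun p => 1 ≤ (p.1 : ℕ) ∧ 1 ≤ (p.2 : ℕ) ∧ (p.1 : ℕ) + (p.2 : ℕ) ≤ m)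

lemma fsPsum {n m : ℕ} (hm : m ≤ n) : ∑ p ∈ fsP n m,
    (m.choose ((p.1 : ℕ) + (p.2 : ℕ)) : ℚ) * ((m - ((p.1 : ℕ) + (p.2 : ℕ))).factorial : ℚ) =
    m.factorial - 1 := by
  have h1 : ∑ p ∈ fsP n m,
    (m.choose ((p.1 : ℕ) + (p.2 : ℕ)) : ℚ) * ((m - ((p.1 : ℕ) + (p.2 : ℕ))).factorial : ℚ) =
    ∑ p ∈ fsP n m, (m.factorial : ℚ) * (1 / (((p.1 : ℕ) + (p.2 : ℕ)).factorial : ℚ)) := by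
    refine Finset.sum_congr rfl fun p hp => ?_
    have hp' : (p.1 : ℕ) + (p.2 : ℕ) ≤ m := by
      simp only [fsP, Finset.mem_filter] at hp
      exact hp.2.2.2
    rw [Nat.cast_choose ℚ hp']
    field_simp
  have h2 : ∑ p ∈ fsP n m, (1 / (((p.1 : ℕ) + (p.2 : ℕ)).factorial : ℚ)) =
      ∑ x ∈ (Finset.range (m + 1)).sigma (fun k => Finset.Ico 1 k),
        (1 / (x.1.factorial : ℚ)) := by
    refine Finset.sum_bij (fun p _ => ⟨(p.1 : ℕ) + (p.2 : ℕ), (p.1 : ℕ)⟩) ?_ ?_ ?_ ?_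
    · intro p hp
      simp only [fsP, Finset.mem_filter] at hp
      simp only [Finset.mem_sigma, Finset.mem_range, Finset.mem_Ico]
      omega
    · intro p _ q _ h
      simp only [Sigma.mk.injEq, heq_eq_eq] at h
      ext <;> omega
    · rintro ⟨k, i⟩ hx
      simp only [Finset.mem_sigma, Finset.mem_range, Finset.mem_Ico] at hx
      refine ⟨(⟨i, by omega⟩, ⟨k - i, by omega⟩), ?_, ?_⟩
      · simp only [fsP, Finset.mem_filter, Finset.mem_univ, true_and]
        omega
      · simp only [Sigma.mk.injEq, heq_eq_eq, and_true]
        omega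
    · intro p _
      rfl
  rw [h1, ← Finset.mul_sum, h2, Finset.sum_sigma]
  simp only [Finset.sum_const, Nat.card_Ico, nsmul_eq_mul]
  rw [fsTel]
  field_simp

lemma fsTotal {n : ℕ} (m : ℕ) : m ≤ n → ∑ c ∈ fsCC n m, fsW m c = m.factorial := by
  induction m using Nat.strong_induction_on with
  | _ m ih =>
  intro hm
  have h0 : (0 : Fin (n + 1) × Fin (n + 1) → ℕ) ∈ fsCC n m := by
    rw [fsMem hm]
    simp [fsSupp, fsTot]
  rw [← Finset.add_sum_erase _ _ h0, fsW_zero]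
  have h1 : ∑ c ∈ (fsCC n m).erase 0, fsW m c =
      ∑ c ∈ (fsCC n m).erase 0, ∑ p ∈ Finset.univ.filter (fun p => 0 < c p),
      (m.choose ((p.1 : ℕ) + (p.2 : ℕ)) : ℚ) *
        fsW (m - ((p.1 : ℕ) + (p.2 : ℕ))) (c - Pi.single p 1) := by
    refine Finset.sum_congr rfl fun c hc => ?_
    rw [Finset.mem_erase, fsMem hm] at hc
    refine fsW_rec m c hc.2.2 ?_
    intro hs
    apply hc.1
    funext p
    exact Finset.sum_eq_zero_iff.1 hs p (Finset.mem_univ _)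
  have h2 : ∑ c ∈ (fsCC n m).erase 0, ∑ p ∈ Finset.univ.filter (fun p => 0 < c p),
      (m.choose ((p.1 : ℕ) + (p.2 : ℕ)) : ℚ) *
        fsW (m - ((p.1 : ℕ) + (p.2 : ℕ))) (c - Pi.single p 1) =
      ∑ p ∈ fsP n m, ∑ c ∈ fsCC n (m - ((p.1 : ℕ) + (p.2 : ℕ))),
        (m.choose ((p.1 : ℕ) + (p.2 : ℕ)) : ℚ) *
        fsW (m - ((p.1 : ℕ) + (p.2 : ℕ))) c := by
    rw [Finset.sum_sigma', Finset.sum_sigma']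
    refine Finset.sum_bij' (fun x _ => ⟨x.2, x.1 - Pi.single x.2 1⟩)
      (fun y _ => ⟨y.2 + Pi.single y.1 1, y.1⟩) ?_ ?_ ?_ ?_ ?_
    · rintro ⟨c, p⟩ hx
      simp only [Finset.mem_sigma, Finset.mem_erase, fsMem hm, Finset.mem_filter,
        Finset.mem_univ, true_and] at hx
      obtain ⟨⟨-, hc, hle⟩, hp⟩ := hx
      have ht := fsTot_sub c p hp
      have hp1 := hc p (by omega)
      simp only [Finset.mem_sigma]
      rw [fsMem (by omega)]
      refine ⟨?_, fsSupp_sub hc p, by omega⟩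
      simp only [fsP, Finset.mem_filter, Finset.mem_univ, true_and]
      omega
    · rintro ⟨p, c⟩ hx
      simp only [Finset.mem_sigma] at hx
      rw [fsMem (by omega)] at hx
      obtain ⟨hp, hc, hle⟩ := hx
      simp only [fsP, Finset.mem_filter, Finset.mem_univ, true_and] at hp
      simp only [Finset.mem_sigma, Finset.mem_erase, fsMem hm, Finset.mem_filter,
        Finset.mem_univ, true_and]
      refine ⟨⟨?_, ?_, ?_⟩, by simp⟩
      · intro h
        have := congrFun h p
        simp at this
      · intro q hq
        by_cases hqp : q = p
        · subst hqp; omega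
        · apply hc q
          simpa [Pi.single_apply, hqp] using hq
      · rw [fsTot_add]; omega
    · rintro ⟨c, p⟩ hx
      simp only [Finset.mem_sigma, Finset.mem_filter, Finset.mem_univ, true_and] at hx
      simp [fsSub_add c p hx.2]
    · rintro ⟨p, c⟩ hx
      simp
    · rintro ⟨c, p⟩ hx
      rfl
  rw [h1, h2]
  have h3 : ∀ p ∈ fsP n m, ∑ c ∈ fsCC n (m - ((p.1 : ℕ) + (p.2 : ℕ))),
        (m.choose ((p.1 : ℕ) + (p.2 : ℕ)) : ℚ) *
        fsW (m - ((p.1 : ℕ) + (p.2 : ℕ))) c =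
      (m.choose ((p.1 : ℕ) + (p.2 : ℕ)) : ℚ) *
        ((m - ((p.1 : ℕ) + (p.2 : ℕ))).factorial : ℚ) := by
    intro p hp
    simp only [fsP, Finset.mem_filter, Finset.mem_univ, true_and] at hp
    rw [← Finset.mul_sum, ih _ (by omega) (by omega)]
  rw [Finset.sum_congr rfl h3, fsPsum hm]
  ring

/-- The number of permutations of `{1,…,n}` (equivalently, by the structure theorem, of
registries) whose family decomposition has, for each `i, j ≥ 1`, exactly `c (i,j)`
families with `i` ascents and `j` descents (hence `n - Σ (i+j)·c(i,j)` singlets) is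
`n!/(n₁!·Π(i+j)!^{c(i,j)}) · (Σc)!/Πc!`, and these weights summed over all
configurations with `n₁ + Σ (i+j)·c(i,j) = n` add up to `n!`. -/
theorem family_statistics (n : ℕ) :
    (∀ c : Fin (n + 1) × Fin (n + 1) → ℕ,
      (∀ p, c p ≠ 0 → 1 ≤ (p.1 : ℕ) ∧ 1 ≤ (p.2 : ℕ)) →
      (∑ p : Fin (n + 1) × Fin (n + 1), ((p.1 : ℕ) + (p.2 : ℕ)) * c p) ≤ n →
      Nat.card {L : List (Finset (Fin n) × ℕ) // IsRegistry L ∧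
          ∀ i j : Fin (n + 1),
            (L.filter (fun p => p.2 = (i : ℕ) ∧ p.1.card = (i : ℕ) + (j : ℕ))).length =
              c (i, j)} = configWeight n c) ∧
    (∑ c ∈ ((Finset.univ : Finset (Fin (n + 1) × Fin (n + 1) → Fin (n + 1))).filter
        (fun c => (∀ p, (c p : ℕ) ≠ 0 → 1 ≤ (p.1 : ℕ) ∧ 1 ≤ (p.2 : ℕ)) ∧
          (∑ p : Fin (n + 1) × Fin (n + 1), ((p.1 : ℕ) + (p.2 : ℕ)) * (c p : ℕ)) ≤ n)),
      configWeight n (fun p => (c p : ℕ))) = n.factorial := by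
  constructor
  · intro c hc hle
    obtain ⟨T, hT, hcard⟩ := fsCount _ (Finset.univ : Finset (Fin n)) c rfl hc (by simpa [fsTot] using hle)
    rw [Finset.card_univ, Fintype.card_fin, ← fsW_eq c hle] at hcard
    have hcard' : T.card = configWeight n c := by exact_mod_cast hcard
    rw [← hcard', ← Nat.card_eq_finsetCard]
    refine Nat.card_congr (Equiv.subtypeEquivRight fun L => ?_)
    rw [hT]
    simp [fsGood]
  · have h := fsTotal n (le_refl n)
    have h' : ((∑ c ∈ fsCC n n, configWeight n c : ℕ) : ℚ) = n.factorial := by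
      rw [← h]
      push_cast
      refine Finset.sum_congr rfl fun c hc => fsW_eq c ((fsMem le_rfl c).1 hc).2
    have h'' : ∑ c ∈ fsCC n n, configWeight n c = n.factorial := by exact_mod_cast h'
    rw [← h'']
    refine Finset.sum_bij (fun c _ => fun p => (c p : ℕ)) ?_ ?_ ?_ ?_
    · intro c hc
      rw [fsMem le_rfl]
      exact (Finset.mem_filter.1 hc).2
    · intro c _ d _ h
      funext p
      exact Fin.ext (congrFun h p)
    · intro c hc
      rw [fsMem le_rfl] at hc
      refine ⟨fun p => ⟨c p, ?_⟩, ?_, rfl⟩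
      · have := fsBound hc.1 p
        omega
      · exact Finset.mem_filter.2 ⟨Finset.mem_univ _, hc⟩
    · intro c _
      rfl
end
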